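/- Cancellation of higher order terms for k = 2 with general H (Corollary 4.9, estimate (L), for classical functions). Let n ≥ 3, Ω ⊆ ℝⁿ a domain, k = 2, and H : Ω×ℝ×ℝⁿ → Sym_n(ℝ) C^{1,1}_loc. Fix concentric balls with closure(B_{2R}) ⊂ Ω, and constants M > 0 and c₀ > 0. Then there is a constant C, depending only on n, R, H, M and c₀, such that the following holds. Let u ∈ C³(Ω) with sup_{B_{2R}}(|u|+|∇u|) ≤ M; let C₁ ∈ [0,M] satisfy Δu + C₁ ≥ 1 and |∇²u| ≤ Δu + C₁ pointwise on B_{2R}; let q > 1, ρ ∈ (0,R/3], 0 < |h| < ρ, and let η be a smooth function supported in B_{R+2ρ} with 0 ≤ η ≤ 1, η ≡ 1 on B_{R+ρ}, |∇η| ≤ c₀/ρ and |∇²η| ≤ c₀/ρ². Set ṽ := v_h + C₁ and F[u]^{ij} := T_1(A_H[u])^{ij} = σ_1(A_H[u])δ^{ij} − (A_H[u])^{ij}. Then ∫_{B_{R+2ρ}} η (ṽ⁺)^{q−1} Σ_j (Σ_i ∂_i(F[u]^{ij})) ∂_j ṽ + Σ_{l=1}^n ∫_{B_{R+2ρ}}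 η (ṽ⁺)^{q−1} Σ_{i,j} F[u]^{ij} Δ_{ll}^h((H[u])_{ij}) ≥ −(C/ρ²)·( ∫_{B_{R+2ρ}}(ṽ⁺)^{q+2} + ∫_{B_{R+3ρ}}(Δu+C₁)^{q+2} ). -/

import Mathlib

open MeasureTheory Metric Set Matrix

noncomputable section

/-- The `k`-th elementary symmetric polynomial of the eigenvalues of an `n × n` real
matrix, defined via the coefficients of the characteristic polynomial. -/
def esymmMat {n : ℕ} (k : ℕ) (A : Matrix (Fin n) (Fin n) ℝ) : ℝ :=
  (-1 : ℝ) ^ k * A.charpoly.coeff (n - k)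

/-- `λ(A) ∈ Γ_k^+`, i.e. `σ_j(A) > 0` for all `1 ≤ j ≤ k`. -/
def GammaPlus {n : ℕ} (k : ℕ) (A : Matrix (Fin n) (Fin n) ℝ) : Prop :=
  ∀ j : ℕ, 1 ≤ j → j ≤ k → 0 < esymmMat j A

/-- The Newton tensors `T_0(A) = I`, `T_j(A) = σ_j(A) I - T_{j-1}(A) A`. -/
def newtonT {n : ℕ} : ℕ → Matrix (Fin n) (Fin n) ℝ → Matrix (Fin n) (Fin n) ℝ
  | 0, _ => 1
  | (j + 1), A => esymmMat (j + 1) A • (1 : Matrix (Fin n) (Fin n) ℝ) - newtonT j A * A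

/-- `i`-th partial derivative. -/
def pd {n : ℕ} (i : Fin n) (w : (Fin n → ℝ) → ℝ) (x : Fin n → ℝ) : ℝ :=
  fderiv ℝ w x (Pi.single i 1)

/-- Gradient as a vector. -/
def grad {n : ℕ} (w : (Fin n → ℝ) → ℝ) (x : Fin n → ℝ) : Fin n → ℝ :=
  fun i => pd i w x

/-- Hessian matrix. -/
def hess {n : ℕ} (w : (Fin n → ℝ) → ℝ) (x : Fin n → ℝ) : Matrix (Fin n) (Fin n) ℝ :=
  Matrix.of fun i j => pd i (pd j w) x

/-- Squared Euclidean norm of a vector. -/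
def normSq {n : ℕ} (ξ : Fin n → ℝ) : ℝ := ∑ i, ξ i ^ 2

/-- Euclidean norm of a vector. -/
def vnorm {n : ℕ} (ξ : Fin n → ℝ) : ℝ := Real.sqrt (∑ i, ξ i ^ 2)

/-- Operator norm of a matrix, viewed as a linear map between Euclidean spaces. -/
def matNorm {n : ℕ} (M : Matrix (Fin n) (Fin n) ℝ) : ℝ :=
  ‖LinearMap.toContinuousLinearMap (Matrix.toEuclideanLin M)‖

/-- Laplacian. -/
def lapl {n : ℕ} (w : (Fin n → ℝ) → ℝ) (x : Fin n → ℝ) : ℝ := ∑ l, pd l (pd l w) x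

/-- `W^{2,p}` norm (with classical derivatives) on a set. -/
def W2pNorm {n : ℕ} (p : ℝ) (w : (Fin n → ℝ) → ℝ) (B : Set (Fin n → ℝ)) : ℝ :=
  (∫ x in B, (|w x| ^ p + vnorm (grad w x) ^ p + matNorm (hess w x) ^ p)) ^ (1 / p)

/-- `C^{1,1}_loc` on a set: continuously differentiable with locally Lipschitz
first derivatives. -/
def C11On {E F : Type*} [NormedAddCommGroup E] [NormedSpace ℝ E]
    [NormedAddCommGroup F] [NormedSpace ℝ F] (f : E → F) (s : Set E) : Prop :=
  ContDiffOn ℝ 1 f s ∧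
    ∀ x ∈ s, ∃ (K : NNReal) (t : Set E), t ∈ nhdsWithin x s ∧
      LipschitzOnWith K (fderivWithin ℝ f s) t

/-- First order difference quotient `∇_l^h`. -/
def dq {n : ℕ} (l : Fin n) (h : ℝ) (w : (Fin n → ℝ) → ℝ) (x : Fin n → ℝ) : ℝ :=
  (w (x + h • (Pi.single l 1 : Fin n → ℝ)) - w x) / h

/-- Second order difference quotient `Δ_{ll}^h`. -/
def ddq {n : ℕ} (l : Fin n) (h : ℝ) (w : (Fin n → ℝ) → ℝ) (x : Fin n → ℝ) : ℝ :=
  (w (x + h • (Pi.single l 1 : Fin n → ℝ)) - 2 * w x + w (x - h • (Pi.single l 1 : Fin n → ℝ))) / h ^ 2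

/-- `L^s` seminorm (as an extended real number) of a function on a set. -/
def lpN {n : ℕ} (s : ℝ) (w : (Fin n → ℝ) → ℝ) (S : Set (Fin n → ℝ)) : ENNReal :=
  (∫⁻ x in S, ENNReal.ofReal (|w x| ^ s)) ^ (1 / s)

end

/-!
Write `v = v_h + C₁`. Since `T₁(∇²u)` is divergence free, the divergence of `F[u] = T₁(∇²u - H[u])`
is of the form `∂H/∂ξ : ∇²u` up to lower order terms, while `F[u] : Δʰ H[u]` is
`F[u] : (∂H/∂ξ · ∇v)` up to a remainder involving only first difference quotients of `u` and `∇u`.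
Together the leading terms form a flux `∑ (a_ikm ∂_k ∂_i u + b_m) ∂_m v` whose coefficients are
functions of `(x, u, ∇u)`, with `a_ikm` antisymmetric in `k` and `m`. Hence integrating the flux
against `η (v⁺)^(q-1)` by parts produces no third derivatives of `u`, and it is controlled by
`∫ (v⁺)^q |∇²u|²` up to lower order terms. The remainder is quadratic in averages of `|∇²u|` over
segments of length `|h|`, to which the inequalities of Young and Jensen and Fubini's theorem apply.
-/

/-! ### Newton tensors and norms -/

section Matrices

variable {n : ℕ}

theorem newtonT_one_apply (A : Matrix (Fin n) (Fin n) ℝ) (i j : Fin n) :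
    newtonT 1 A i j = (∑ k, A k k) * (1 : Matrix (Fin n) (Fin n) ℝ) i j - A i j := by
  have : Nonempty (Fin n) := ⟨i⟩
  have esymmMat_one : esymmMat 1 A = ∑ k, A k k := by
    change _ = A.trace
    rw [Matrix.trace_eq_neg_charpoly_coeff, esymmMat]
    simp
  simp [newtonT, esymmMat_one]

theorem abs_newtonT_one_le {A : Matrix (Fin n) (Fin n) ℝ} {c : ℝ} (hA : ∀ i j, |A i j| ≤ c)
    (i j : Fin n) : |newtonT 1 A i j| ≤ (n + 1) * c := by
  have trace_le : |∑ k, A k k| ≤ n * c := by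
    simpa using (Finset.abs_sum_le_sum_abs _ Finset.univ).trans
      (Finset.sum_le_sum fun k _ => hA k k)
  have one_le : |(1 : Matrix (Fin n) (Fin n) ℝ) i j| ≤ 1 := by
    rw [Matrix.one_apply]
    split_ifs <;> simp
  calc |newtonT 1 A i j| ≤ |∑ k, A k k| * |(1 : Matrix (Fin n) (Fin n) ℝ) i j| + |A i j| := by
        rw [newtonT_one_apply, ← abs_mul]
        exact abs_sub _ _
    _ ≤ n * c * 1 + c := by
        gcongr
        · exact (abs_nonneg _).trans trace_le
        · exact hA i j
    _ = (n + 1) * c := by ring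

theorem abs_apply_le_vnorm (ξ : Fin n → ℝ) (i : Fin n) : |ξ i| ≤ vnorm ξ :=
  Real.abs_le_sqrt <|
    Finset.single_le_sum (f := fun i => ξ i ^ 2) (fun _ _ => sq_nonneg _) (Finset.mem_univ i)

theorem abs_apply_le_matNorm (A : Matrix (Fin n) (Fin n) ℝ) (i j : Fin n) :
    |A i j| ≤ matNorm A := by
  set T := LinearMap.toContinuousLinearMap (Matrix.toEuclideanLin A)
  have apply_single : T (EuclideanSpace.single j 1) i = A i j := by
    simp [T, Matrix.toLpLin_apply]
  calc |A i j| = ‖T (EuclideanSpace.single j 1) i‖ := by rw [apply_single, Real.norm_eq_abs]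
    _ ≤ ‖T (EuclideanSpace.single j 1)‖ := PiLp.norm_apply_le _ i
    _ ≤ ‖T‖ := by simpa using T.le_opNorm (EuclideanSpace.single j 1)

end Matrices

/-! ### Powers of the positive part and Young's inequality -/

section PositivePart

variable {q : ℝ}

theorem hasDerivAt_max_zero_rpow (hq : 1 < q) (t : ℝ) :
    HasDerivAt (fun t : ℝ => max t 0 ^ q) (q * max t 0 ^ (q - 1)) t := by
  have zero_rpow : (0 : ℝ) ^ q = 0 := Real.zero_rpow (by linarith)
  have right {t : ℝ} (ht : 0 ≤ t) :
      HasDerivWithinAt (fun t : ℝ => max t 0 ^ q) (q * max t 0 ^ (q - 1)) (Ici 0) t := by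
    rw [max_eq_left ht]
    exact (Real.hasDerivAt_rpow_const (Or.inr hq.le)).hasDerivWithinAt.congr
      (fun s hs => by rw [max_eq_left hs]) (by rw [max_eq_left ht])
  have left {t : ℝ} (ht : t ≤ 0) :
      HasDerivWithinAt (fun t : ℝ => max t 0 ^ q) (q * max t 0 ^ (q - 1)) (Iic 0) t := by
    rw [max_eq_right ht, Real.zero_rpow (by linarith), mul_zero]
    exact (hasDerivWithinAt_const t _ (0 : ℝ)).congr
      (fun s hs => by rw [max_eq_right hs, zero_rpow]) (by rw [max_eq_right ht, zero_rpow])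
  rcases lt_trichotomy t 0 with ht | rfl | ht
  · exact (left ht.le).hasDerivAt (Iic_mem_nhds ht)
  · rw [← hasDerivWithinAt_univ, ← Iic_union_Ici]
    exact (left le_rfl).union (right le_rfl)
  · exact (right ht.le).hasDerivAt (Ici_mem_nhds ht)

theorem contDiff_max_zero_rpow (hq : 1 < q) : ContDiff ℝ 1 fun t : ℝ => max t 0 ^ q := by
  refine contDiff_one_iff_deriv.2
    ⟨fun t => (hasDerivAt_max_zero_rpow hq t).differentiableAt, ?_⟩
  rw [funext fun t => (hasDerivAt_max_zero_rpow hq t).deriv]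
  exact continuous_const.mul
    ((continuous_id.max continuous_const).rpow_const fun _ => Or.inr (by linarith))

theorem rpow_sub_one_mul_mul_sq_le {a b c : ℝ} (hq : 1 < q) (ha : 0 ≤ a) (hb : 0 ≤ b)
    (hc : 0 ≤ c) : c ^ (q - 1) * a * b ^ 2 ≤ a ^ (q + 2) + b ^ (q + 2) + c ^ (q + 2) := by
  set m := max a (max b c) with hm
  have hm0 : 0 ≤ m := ha.trans (le_max_left _ _)
  have product_le : c ^ (q - 1) * a * b ^ 2 ≤ m ^ (q - 1) * m * m ^ 2 := by
    have : c ^ (q - 1) ≤ m ^ (q - 1) :=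
      Real.rpow_le_rpow hc (by simp [m]) (by linarith)
    gcongr <;> simp [m]
  have rpow_eq : m ^ (q - 1) * m * m ^ 2 = m ^ (q + 2) := by
    rw [show q + 2 = (q - 1) + 1 + (2 : ℕ) by push_cast; ring, Real.rpow_add_natCast' hm0
      (by push_cast; linarith), Real.rpow_add_one' hm0 (by linarith)]
  have ha' := Real.rpow_nonneg ha (q + 2)
  have hb' := Real.rpow_nonneg hb (q + 2)
  have hc' := Real.rpow_nonneg hc (q + 2)
  refine (product_le.trans_eq rpow_eq).trans ?_
  rcases max_choice a (max b c) with h | h <;> rcases max_choice b c with h' | h' <;>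
    rw [hm, h] <;> (try rw [h']) <;> linarith

theorem rpow_mul_sq_le {b c : ℝ} (hq : 1 < q) (hb : 0 ≤ b) (hc : 0 ≤ c) :
    c ^ q * b ^ 2 ≤ 2 * (c ^ (q + 2) + b ^ (q + 2)) := by
  have young := rpow_sub_one_mul_mul_sq_le hq hc hb hc
  rw [← Real.rpow_add_one' hc (by linarith), sub_add_cancel] at young
  linarith [Real.rpow_nonneg hb (q + 2)]

theorem rpow_sub_one_mul_mul_add_sum_le {ι : Type*} [Fintype ι] {q a c : ℝ} {s s' : ι → ℝ}
    (hq : 1 < q) (ha : 0 ≤ a) (hc : 0 ≤ c) (hs : ∀ i, 0 ≤ s i) (hs' : ∀ i, 0 ≤ s' i) :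
    c ^ (q - 1) * a * (c ^ 2 + 2 * a ^ 2 + ∑ i, (s i ^ 2 + s' i ^ 2)) ≤
      (2 * Fintype.card ι + 5) *
        (c ^ (q + 2) + a ^ (q + 2) + ∑ i, (s i ^ (q + 2) + s' i ^ (q + 2))) := by
  have sum_le : c ^ (q - 1) * a * ∑ i, (s i ^ 2 + s' i ^ 2) ≤
      2 * Fintype.card ι * (c ^ (q + 2) + a ^ (q + 2)) +
        ∑ i, (s i ^ (q + 2) + s' i ^ (q + 2)) := by
    calc c ^ (q - 1) * a * ∑ i, (s i ^ 2 + s' i ^ 2)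
        ≤ ∑ i, (2 * (c ^ (q + 2) + a ^ (q + 2)) + (s i ^ (q + 2) + s' i ^ (q + 2))) := by
          rw [Finset.mul_sum]
          refine Finset.sum_le_sum fun i _ => ?_
          linarith [rpow_sub_one_mul_mul_sq_le hq ha (hs i) hc,
            rpow_sub_one_mul_mul_sq_le hq ha (hs' i) hc]
      _ = _ := by
          rw [Finset.sum_add_distrib, Finset.sum_const, Finset.card_univ, nsmul_eq_mul]
          ring
  have hs'' : 0 ≤ ∑ i, (s i ^ (q + 2) + s' i ^ (q + 2)) := Finset.sum_nonneg fun i _ =>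
    add_nonneg (Real.rpow_nonneg (hs i) _) (Real.rpow_nonneg (hs' i) _)
  have spare : 0 ≤ 2 * (Fintype.card ι : ℝ) * ∑ i, (s i ^ (q + 2) + s' i ^ (q + 2)) := by
    positivity
  linarith [rpow_sub_one_mul_mul_sq_le hq ha ha hc, rpow_sub_one_mul_mul_sq_le hq ha hc hc,
    Real.rpow_nonneg hc (q + 2)]

end PositivePart

/-! ### Partial derivatives and integration by parts -/

section PartialDerivatives

variable {n : ℕ} {O : Set (Fin n → ℝ)} {f g : (Fin n → ℝ) → ℝ} {x : Fin n → ℝ}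

theorem contDiffOn_pd {m k : WithTop ℕ∞} (hO : IsOpen O) (hf : ContDiffOn ℝ k f O)
    (hmk : m + 1 ≤ k) (i : Fin n) : ContDiffOn ℝ m (pd i f) O :=
  (hf.fderiv_of_isOpen hO hmk).clm_apply contDiffOn_const

theorem continuousOn_hess_apply (hO : IsOpen O) (hf : ContDiffOn ℝ 2 f O) (i j : Fin n) :
    ContinuousOn (fun x => hess f x i j) O :=
  (contDiffOn_pd (m := 0) hO (contDiffOn_pd (m := 1) hO hf (by norm_num) j)
    (by norm_num) i).continuousOn

theorem pd_congr (h : f =ᶠ[nhds x] g) (i : Fin n) : pd i f x = pd i g x := by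
  rw [pd, pd, h.fderiv_eq]

theorem pd_mul (hf : DifferentiableAt ℝ f x) (hg : DifferentiableAt ℝ g x) (i : Fin n) :
    pd i (fun y => f y * g y) x = f x * pd i g x + g x * pd i f x := by
  simp [pd, fderiv_fun_mul hf hg]

theorem pd_sub (hf : DifferentiableAt ℝ f x) (hg : DifferentiableAt ℝ g x) (i : Fin n) :
    pd i (fun y => f y - g y) x = pd i f x - pd i g x := by
  simp [pd, fderiv_fun_sub hf hg]

theorem pd_sum {ι : Type*} {s : Finset ι} {f : ι → (Fin n → ℝ) → ℝ}
    (hf : ∀ k ∈ s, DifferentiableAt ℝ (f k) x) (i : Fin n) :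
    pd i (fun y => ∑ k ∈ s, f k y) x = ∑ k ∈ s, pd i (f k) x := by
  simp [pd, fderiv_fun_sum hf]

theorem pd_comm (hO : IsOpen O) (hf : ContDiffOn ℝ 2 f O) (hx : x ∈ O) (i j : Fin n) :
    pd i (pd j f) x = pd j (pd i f) x := by
  have hfx : ContDiffAt ℝ 2 f x := hf.contDiffAt (hO.mem_nhds hx)
  have hf' : DifferentiableAt ℝ (fderiv ℝ f) x :=
    (hfx.fderiv_right (m := 1) (by norm_num)).differentiableAt one_ne_zero
  have pd_pd (k l : Fin n) :
      pd k (pd l f) x = fderiv ℝ (fderiv ℝ f) x (Pi.single k 1) (Pi.single l 1) := by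
    change fderiv ℝ (fun y => fderiv ℝ f y (Pi.single l 1)) x (Pi.single k 1) = _
    simp [fderiv_clm_apply hf' (differentiableAt_const _)]
  rw [pd_pd, pd_pd, (hfx.isSymmSndFDerivAt (by simp)).eq]

end PartialDerivatives

section IntegrationByParts

variable {n : ℕ} {O B : Set (Fin n → ℝ)} {η a s : (Fin n → ℝ) → ℝ} {j : Fin n}

theorem pd_eq_zero_of_eq_zero (hη : ∀ x, 0 ≤ η x) {x : Fin n → ℝ} (hx : η x = 0) (j : Fin n) :
    pd j η x = 0 := by
  have hmin : IsLocalMin η x := Filter.Eventually.of_forall fun y => hx.trans_le (hη y)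
  rw [pd, hmin.fderiv_eq_zero, _root_.zero_apply]

theorem contDiff_mul_of_tsupport_subset (hO : IsOpen O) (hη : ContDiff ℝ 1 η)
    (hηO : tsupport η ⊆ O) (hs : ContDiffOn ℝ 1 s O) : ContDiff ℝ 1 fun x => η x * s x := by
  refine contDiff_iff_contDiffAt.2 fun x => ?_
  by_cases hx : x ∈ tsupport η
  · exact hη.contDiffAt.mul (hs.contDiffAt (hO.mem_nhds (hηO hx)))
  · exact (contDiffAt_const (c := 0)).congr_of_eventuallyEq <|
      (notMem_tsupport_iff_eventuallyEq.1 hx).mono fun y hy => by simp [hy]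

theorem integrable_mul_of_tsupport_subset (hO : IsOpen O) (hη : Continuous η)
    (hηc : HasCompactSupport η) (hηO : tsupport η ⊆ O) (hs : ContinuousOn s O) :
    Integrable fun x => η x * s x :=
  Continuous.integrable_of_hasCompactSupport
    (continuous_of_tsupport fun _ hx => hη.continuousAt.mul <|
      hs.continuousAt (hO.mem_nhds (hηO (tsupport_mul_subset_left hx))))
    hηc.mul_right

theorem pd_mul_of_tsupport_subset (hO : IsOpen O) (hη : ContDiff ℝ 1 η) (hηO : tsupport η ⊆ O)
    (hs : ContDiffOn ℝ 1 s O) (x : Fin n → ℝ) :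
    pd j (fun y => η y * s y) x = η x * pd j s x + pd j η x * s x := by
  by_cases hx : x ∈ tsupport η
  · rw [pd_mul (hη.differentiable one_ne_zero x)
      ((hs.contDiffAt (hO.mem_nhds (hηO hx))).differentiableAt one_ne_zero), mul_comm (s x)]
  · have hx' : η =ᶠ[nhds x] 0 := notMem_tsupport_iff_eventuallyEq.1 hx
    have product : (fun y => η y * s y) =ᶠ[nhds x] 0 :=
      hx'.mono fun y hy => by simp [hy]
    simp [pd, product.fderiv_eq, hx'.fderiv_eq, hx'.eq_of_nhds]

theorem integral_lineDeriv_mul_mul_eq (hO : IsOpen O) (hη : ContDiff ℝ 1 η)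
    (hηc : HasCompactSupport η) (hηO : tsupport η ⊆ O) {L : NNReal} (ha : LipschitzOnWith L a O)
    (hs : ContDiffOn ℝ 1 s O) :
    ∫ x, η x * (lineDeriv ℝ a x (Pi.single j 1) * s x) =
      -∫ x, (η x * (a x * pd j s x) + pd j η x * (a x * s x)) := by
  obtain ⟨b, hb, hab⟩ := ha.extend_real
  have hg : ContDiff ℝ 1 fun x => η x * s x := contDiff_mul_of_tsupport_subset hO hη hηO hs
  have hgc : HasCompactSupport fun x => η x * s x := hηc.mul_right
  obtain ⟨D, hD⟩ := hg.lipschitzWith_of_hasCompactSupport hgc one_ne_zero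
  have parts := hb.integral_lineDeriv_mul_eq (μ := volume) hD hgc (Pi.single j 1)
  have lineDeriv_neg (x : Fin n → ℝ) : lineDeriv ℝ (fun x => η x * s x) x (-Pi.single j 1) =
      -(η x * pd j s x + pd j η x * s x) := by
    rw [(hg.differentiable one_ne_zero x).lineDeriv_eq_fderiv, map_neg,
      ← pd_mul_of_tsupport_subset hO hη hηO hs, pd]
  have left_eq (x : Fin n → ℝ) : η x * (lineDeriv ℝ a x (Pi.single j 1) * s x) =
      lineDeriv ℝ b x (Pi.single j 1) * (η x * s x) := by
    by_cases hx : x ∈ O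
    · rw [(hab.eventuallyEq_of_mem (hO.mem_nhds hx)).lineDeriv_eq]
      ring
    · simp [image_eq_zero_of_notMem_tsupport fun h => hx (hηO h)]
  have right_eq (x : Fin n → ℝ) : η x * (a x * pd j s x) + pd j η x * (a x * s x) =
      (η x * pd j s x + pd j η x * s x) * b x := by
    by_cases hx : x ∈ O
    · rw [hab hx]
      ring
    · have pd_eq : pd j η x = 0 := image_eq_zero_of_notMem_tsupport
        fun h => hx (hηO (tsupport_fderiv_apply_subset ℝ _ h))
      simp [pd_eq, image_eq_zero_of_notMem_tsupport fun h => hx (hηO h)]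
  simp only [left_eq, right_eq, parts, lineDeriv_neg, neg_mul, integral_neg]

theorem abs_setIntegral_mul_pd_le (hO : IsOpen O) (hB : MeasurableSet B) (hη : ContDiff ℝ 1 η)
    (hηc : HasCompactSupport η) (hηO : tsupport η ⊆ O) (hηB : ∀ x ∉ B, η x = 0)
    (hη01 : ∀ x, 0 ≤ η x ∧ η x ≤ 1) {c : ℝ} (hηj : ∀ x, |pd j η x| ≤ c)
    {L : NNReal} (ha : LipschitzOnWith L a O) (hs : ContDiffOn ℝ 1 s O)
    {g : (Fin n → ℝ) → ℝ} (hg : IntegrableOn g B) (hag : ∀ x ∈ B, |a x * s x| ≤ g x)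
    (hag' : ∀ x ∈ B, |lineDeriv ℝ a x (Pi.single j 1) * s x| ≤ g x) :
    |∫ x in B, η x * (a x * pd j s x)| ≤ (c + 1) * ∫ x in B, g x := by
  have hsj : ContinuousOn (pd j s) O := (contDiffOn_pd (m := 0) hO hs (by simp) j).continuousOn
  have on_B {F G : (Fin n → ℝ) → ℝ} (hF : ∀ x, η x = 0 → F x = 0) :
      ∫ x in B, F x * G x = ∫ x, F x * G x :=
    setIntegral_eq_integral_of_forall_compl_eq_zero fun x hx => by
      rw [hF x (hηB x hx), zero_mul]
  have split : ∫ x in B, η x * (a x * pd j s x) =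
      -(∫ x in B, η x * (lineDeriv ℝ a x (Pi.single j 1) * s x)) -
        ∫ x in B, pd j η x * (a x * s x) := by
    rw [on_B fun _ => id, on_B fun _ => id,
      on_B fun x hx => pd_eq_zero_of_eq_zero (fun y => (hη01 y).1) hx j,
      integral_lineDeriv_mul_mul_eq hO hη hηc hηO ha hs, integral_add, neg_neg,
      add_sub_cancel_right]
    · exact integrable_mul_of_tsupport_subset hO hη.continuous hηc hηO
        (ha.continuousOn.mul hsj)
    · exact integrable_mul_of_tsupport_subset hO
        ((hη.continuous_fderiv one_ne_zero).clm_apply continuous_const)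
        (hηc.fderiv_apply ℝ _) ((tsupport_fderiv_apply_subset ℝ _).trans hηO)
        (ha.continuousOn.mul hs.continuousOn)
  have derivative_bound : ‖∫ x in B, η x * (lineDeriv ℝ a x (Pi.single j 1) * s x)‖ ≤
      ∫ x in B, g x :=
    norm_integral_le_of_norm_le hg <| (ae_restrict_iff' hB).2 <| .of_forall fun x hx => by
      rw [norm_mul, Real.norm_of_nonneg (hη01 x).1]
      exact (mul_le_of_le_one_left (norm_nonneg _) (hη01 x).2).trans (hag' x hx)
  have cutoff_bound : ‖∫ x in B, pd j η x * (a x * s x)‖ ≤ c * ∫ x in B, g x := by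
    rw [← integral_const_mul]
    refine norm_integral_le_of_norm_le (hg.const_mul c) <|
      (ae_restrict_iff' hB).2 <| .of_forall fun x hx => ?_
    rw [norm_mul]
    exact mul_le_mul (hηj x) (hag x hx) (norm_nonneg _) ((abs_nonneg _).trans (hηj x))
  rw [Real.norm_eq_abs] at derivative_bound cutoff_bound
  rw [split]
  exact (abs_sub _ _).trans (by rw [abs_neg]; linarith)

end IntegrationByParts

/-! ### Averages over segments and second differences -/

section Segments

variable {E F : Type*} [NormedAddCommGroup E] [NormedSpace ℝ E] [NormedAddCommGroup F]
  [NormedSpace ℝ F] {O : Set E} {x e : E} {w : E → ℝ}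

/-- The average of `w` over the segment from `x` to `x + e`. It dominates increments of functions
whose derivative is controlled by `w`, and its powers are compared with integrals of powers of `w`
by Jensen's inequality and Fubini's theorem. -/
noncomputable def segAvg (w : E → ℝ) (e x : E) : ℝ := ∫ t in (0 : ℝ)..1, w (x + t • e)

theorem mapsTo_add_smul_ball {x₀ : E} {r r' : ℝ} (hx : x ∈ closedBall x₀ r) (hr : r + ‖e‖ < r') :
    MapsTo (fun t : ℝ => x + t • e) (Icc 0 1) (ball x₀ r') := by
  intro t ht
  have smul_le : ‖t • e‖ ≤ ‖e‖ := by
    rw [norm_smul, Real.norm_of_nonneg ht.1]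
    exact mul_le_of_le_one_left (norm_nonneg e) ht.2
  rw [mem_ball, dist_eq_norm, add_sub_right_comm]
  linarith [norm_add_le (x - x₀) (t • e), mem_closedBall_iff_norm.1 hx]

theorem norm_add_sub_le_mul_segAvg {f : E → F} {c : ℝ} (hO : IsOpen O)
    (hxe : MapsTo (fun t : ℝ => x + t • e) (Icc 0 1) O) (hf : DifferentiableOn ℝ f O)
    (hw : ContinuousOn w O) (hfw : ∀ y ∈ O, ‖fderiv ℝ f y e‖ ≤ c * w y) :
    ‖f (x + e) - f x‖ ≤ c * segAvg w e x := by
  have hderiv {t : ℝ} (ht : t ∈ Icc (0 : ℝ) 1) :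
      HasDerivAt (fun t : ℝ => f (x + t • e)) (fderiv ℝ f (x + t • e) e) t := by
    have path : HasDerivAt (fun t : ℝ => x + t • e) e t := by
      simpa using ((hasDerivAt_id t).smul_const e).const_add x
    exact (hf.differentiableAt (hO.mem_nhds (hxe ht))).hasFDerivAt.comp_hasDerivAt t path
  have hcont : ContinuousOn (fun t : ℝ => w (x + t • e)) (Icc 0 1) := hw.comp (by fun_prop) hxe
  have speed := norm_sub_le_integral_of_norm_deriv_le_of_le (B := fun t => c * w (x + t • e))
    zero_le_one (fun t ht => (hderiv ht).continuousAt.continuousWithinAt)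
    (fun t ht => (hderiv (Ioo_subset_Icc_self ht)).differentiableAt.differentiableWithinAt)
    (.of_forall fun t ht => by
      rw [(hderiv (Ioo_subset_Icc_self ht)).deriv]
      exact hfw _ (hxe (Ioo_subset_Icc_self ht)))
    ((hcont.const_mul c).intervalIntegrable_of_Icc zero_le_one)
  simpa [segAvg] using speed

theorem segAvg_nonneg (hxe : MapsTo (fun t : ℝ => x + t • e) (Icc 0 1) O)
    (hw : ∀ y ∈ O, 0 ≤ w y) : 0 ≤ segAvg w e x :=
  intervalIntegral.integral_nonneg zero_le_one fun _ ht => hw _ (hxe ht)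

theorem segAvg_rpow_le {p : ℝ} (hp : 1 ≤ p) (hxe : MapsTo (fun t : ℝ => x + t • e) (Icc 0 1) O)
    (hw : ContinuousOn w O) (hw0 : ∀ y ∈ O, 0 ≤ w y) :
    segAvg w e x ^ p ≤ segAvg (fun y => w y ^ p) e x := by
  have : IsProbabilityMeasure (volume.restrict (Ioc (0 : ℝ) 1)) := ⟨by simp⟩
  have hcont : ContinuousOn (fun t : ℝ => w (x + t • e)) (Icc 0 1) := hw.comp (by fun_prop) hxe
  have hcont' : ContinuousOn (fun t : ℝ => w (x + t • e) ^ p) (Icc 0 1) :=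
    hcont.rpow_const fun _ _ => Or.inr (by linarith)
  simp only [segAvg, intervalIntegral.integral_of_le zero_le_one]
  exact (convexOn_rpow hp).map_integral_le
    (continuousOn_id.rpow_const fun _ _ => Or.inr (by linarith)) isClosed_Ici
    ((ae_restrict_iff' measurableSet_Ioc).2 <| .of_forall fun t ht =>
      hw0 _ (hxe (Ioc_subset_Icc_self ht)))
    (hcont.integrableOn_Icc.mono_set Ioc_subset_Icc_self)
    (hcont'.integrableOn_Icc.mono_set Ioc_subset_Icc_self)

section Fubini

theorem setIntegral_ball_add_le {E : Type*} [NormedAddCommGroup E] [MeasurableSpace E]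
    [BorelSpace E] {μ : Measure E} [μ.IsAddRightInvariant] {w : E → ℝ} {x₀ e : E} {r r' : ℝ}
    (hr : r + ‖e‖ ≤ r')
    (hw : IntegrableOn w (ball x₀ r') μ) (hw0 : ∀ y ∈ ball x₀ r', 0 ≤ w y) :
    ∫ x in ball x₀ r, w (x + e) ∂μ ≤ ∫ x in ball x₀ r', w x ∂μ := by
  have preimage : (fun x => x + e) ⁻¹' ball (x₀ + e) r = ball x₀ r := by
    ext x
    simp
  have subset : ball (x₀ + e) r ⊆ ball x₀ r' := ball_subset_ball' (by simpa using hr)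
  rw [← preimage, (measurePreserving_add_right μ e).setIntegral_preimage_emb
    (measurableEmbedding_addRight e)]
  exact setIntegral_mono_set hw
    ((ae_restrict_iff' measurableSet_ball).2 (.of_forall hw0)) subset.eventuallyLE

theorem integrableOn_ball {E : Type*} [NormedAddCommGroup E] [ProperSpace E] [MeasurableSpace E]
    [OpensMeasurableSpace E] {μ : Measure E} [IsLocallyFiniteMeasure μ] {w : E → ℝ} {x₀ : E}
    {r r' : ℝ} (hr : r < r') (hw : ContinuousOn w (ball x₀ r')) :
    IntegrableOn w (ball x₀ r) μ :=
  ((hw.mono (closedBall_subset_ball hr)).integrableOn_compact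
    (isCompact_closedBall x₀ r)).mono_set ball_subset_closedBall

variable [MeasurableSpace E] [BorelSpace E] [ProperSpace E] {μ : Measure E}
  [IsLocallyFiniteMeasure μ] {x₀ : E} {r r' : ℝ}

theorem integrable_segment_ball (hr : r + ‖e‖ < r') (hw : ContinuousOn w (ball x₀ r')) :
    Integrable (fun z : E × ℝ => w (z.1 + z.2 • e))
      ((μ.restrict (ball x₀ r)).prod (volume.restrict (Ioc 0 1))) := by
  rw [Measure.prod_restrict]
  have hcont : ContinuousOn (fun z : E × ℝ => w (z.1 + z.2 • e)) (closedBall x₀ r ×ˢ Icc 0 1) :=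
    hw.comp (by fun_prop) fun z hz => mapsTo_add_smul_ball hz.1 hr hz.2
  exact (hcont.integrableOn_compact ((isCompact_closedBall _ _).prod isCompact_Icc)).mono_set
    (prod_mono ball_subset_closedBall Ioc_subset_Icc_self)

theorem integrableOn_segAvg (hr : r + ‖e‖ < r') (hw : ContinuousOn w (ball x₀ r')) :
    IntegrableOn (segAvg w e) (ball x₀ r) μ := by
  have segAvg_eq : segAvg w e = fun x => ∫ t in Ioc (0 : ℝ) 1, w (x + t • e) :=
    funext fun x => intervalIntegral.integral_of_le zero_le_one
  rw [segAvg_eq]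
  exact (integrable_segment_ball hr hw).integral_prod_left

theorem setIntegral_segAvg_le [μ.IsAddRightInvariant] (hr : r + ‖e‖ < r')
    (hw : ContinuousOn w (ball x₀ r')) (hwi : IntegrableOn w (ball x₀ r') μ)
    (hw0 : ∀ y ∈ ball x₀ r', 0 ≤ w y) :
    ∫ x in ball x₀ r, segAvg w e x ∂μ ≤ ∫ x in ball x₀ r', w x ∂μ := by
  have integrable := integrable_segment_ball (μ := μ) hr hw
  have slice_le {t : ℝ} (ht : t ∈ Ioc (0 : ℝ) 1) :
      ∫ x in ball x₀ r, w (x + t • e) ∂μ ≤ ∫ x in ball x₀ r', w x ∂μ := by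
    refine setIntegral_ball_add_le ?_ hwi hw0
    rw [norm_smul, Real.norm_of_nonneg ht.1.le]
    linarith [mul_le_of_le_one_left (norm_nonneg e) ht.2]
  calc ∫ x in ball x₀ r, segAvg w e x ∂μ
      = ∫ t in Ioc (0 : ℝ) 1, ∫ x in ball x₀ r, w (x + t • e) ∂μ := by
        simp only [segAvg, intervalIntegral.integral_of_le zero_le_one]
        exact integral_integral_swap integrable
    _ ≤ ∫ _ in Ioc (0 : ℝ) 1, ∫ x in ball x₀ r', w x ∂μ :=
        setIntegral_mono_on integrable.integral_prod_right (by simp) measurableSet_Ioc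
          fun t ht => slice_le ht
    _ = ∫ x in ball x₀ r', w x ∂μ := by simp

end Fubini

section Taylor

variable {K : Set E} {f : E → ℝ} {L : NNReal} {y z z' : E}

theorem abs_sub_sub_fderiv_le (hK : Convex ℝ K) (hf : ∀ y ∈ K, DifferentiableAt ℝ f y)
    (hf' : LipschitzOnWith L (fderiv ℝ f) K) (hy : y ∈ K) (hz : z ∈ K) :
    |f z - f y - fderiv ℝ f y (z - y)| ≤ L * ‖z - y‖ ^ 2 := by
  have segment_subset : segment ℝ y z ⊆ K := hK.segment_subset hy hz
  have fderiv_sub_le (t : E) (ht : t ∈ segment ℝ y z) :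
      ‖fderiv ℝ f t - fderiv ℝ f y‖ ≤ L * ‖z - y‖ := by
    refine (hf'.norm_sub_le (segment_subset ht) hy).trans ?_
    gcongr
    obtain ⟨θ, hθ, rfl⟩ := segment_eq_image' ℝ y z ▸ ht
    rw [add_sub_cancel_left, norm_smul, Real.norm_of_nonneg hθ.1]
    exact mul_le_of_le_one_left (norm_nonneg _) hθ.2
  have mean_value := (convex_segment y z).norm_image_sub_le_of_norm_fderiv_le'
    (fun t ht => hf t (segment_subset ht)) fderiv_sub_le (left_mem_segment ℝ y z)
    (right_mem_segment ℝ y z)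
  rwa [Real.norm_eq_abs, mul_assoc, ← sq] at mean_value

theorem abs_secondDifference_sub_fderiv_le (hK : Convex ℝ K)
    (hf : ∀ y ∈ K, DifferentiableAt ℝ f y) (hf' : LipschitzOnWith L (fderiv ℝ f) K)
    (hy : y ∈ K) (hz : z ∈ K) (hz' : z' ∈ K) :
    |f z - 2 * f y + f z' - fderiv ℝ f y (z - (2 : ℝ) • y + z')| ≤
      L * (‖z - y‖ ^ 2 + ‖z' - y‖ ^ 2) := by
  have split : f z - 2 * f y + f z' - fderiv ℝ f y (z - (2 : ℝ) • y + z') =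
      (f z - f y - fderiv ℝ f y (z - y)) + (f z' - f y - fderiv ℝ f y (z' - y)) := by
    simp only [map_add, map_sub, map_smul, smul_eq_mul]
    ring
  rw [split, mul_add]
  exact (abs_add_le _ _).trans
    (add_le_add (abs_sub_sub_fderiv_le hK hf hf' hy hz) (abs_sub_sub_fderiv_le hK hf hf' hy hz'))

end Taylor

end Segments

/-! ### One-jets and the chain rule -/

section Jets

variable {n : ℕ} {O : Set (Fin n → ℝ)} {u : (Fin n → ℝ) → ℝ} {x : Fin n → ℝ}

/-- The space of one-jets `(x, z, ξ)` of real functions on `ℝⁿ`, with the sup norm. -/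
abbrev JetSpace (n : ℕ) : Type := (Fin n → ℝ) × ℝ × (Fin n → ℝ)

/-- The one-jet `(x, u x, ∇u x)`, so that `H[u] = H ∘ jet u`. -/
noncomputable def jet (u : (Fin n → ℝ) → ℝ) (x : Fin n → ℝ) : JetSpace n := (x, u x, grad u x)

/-- The augmented Hessian `∇²u - H[u]`. -/
noncomputable def augHess (H : JetSpace n → Matrix (Fin n) (Fin n) ℝ) (u : (Fin n → ℝ) → ℝ)
    (x : Fin n → ℝ) : Matrix (Fin n) (Fin n) ℝ :=
  hess u x - H (jet u x)

/-- The derivative of `G` with respect to the gradient variable `ξ_k`. -/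
noncomputable def gradientDeriv (k : Fin n) (G : JetSpace n → ℝ) (y : JetSpace n) : ℝ :=
  fderiv ℝ G y (0, 0, Pi.single k 1)

/-- The part `∂_{x_m} G + ξ_m ∂_z G` of the total derivative of `G` which does not involve second
derivatives of the function whose jet is inserted. -/
noncomputable def baseDeriv (m : Fin n) (G : JetSpace n → ℝ) (y : JetSpace n) : ℝ :=
  fderiv ℝ G y (Pi.single m 1, y.2.2 m, 0)

theorem fderiv_apply_eq_add_sum_gradientDeriv (G : JetSpace n → ℝ) (y : JetSpace n)
    (a : Fin n → ℝ) (z : ℝ) (ξ : Fin n → ℝ) :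
    fderiv ℝ G y (a, z, ξ) = fderiv ℝ G y (a, z, 0) + ∑ k, ξ k * gradientDeriv k G y := by
  have decompose : ((a, z, ξ) : JetSpace n) =
      (a, z, 0) + ∑ k, ξ k • ((0, 0, Pi.single k 1) : JetSpace n) := by
    ext i
    · simp [Prod.fst_sum]
    · simp [Prod.snd_sum, Prod.fst_sum]
    · simp [Prod.snd_sum, Finset.sum_apply, Pi.single_apply]
  rw [decompose, map_add, map_sum]
  simp only [map_smul, smul_eq_mul, gradientDeriv]

theorem contDiffOn_jet (hO : IsOpen O) (hu : ContDiffOn ℝ 2 u O) : ContDiffOn ℝ 1 (jet u) O :=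
  contDiffOn_id.prodMk <| (hu.of_le (by norm_num)).prodMk <|
    contDiffOn_pi.2 fun i => contDiffOn_pd hO hu (by norm_num) i

theorem hasFDerivAt_jet (hO : IsOpen O) (hu : ContDiffOn ℝ 2 u O) (hx : x ∈ O) :
    HasFDerivAt (jet u) (fderiv ℝ (jet u) x) x :=
  (((contDiffOn_jet hO hu).contDiffAt (hO.mem_nhds hx)).differentiableAt
    one_ne_zero).hasFDerivAt

theorem fderiv_jet_apply (hO : IsOpen O) (hu : ContDiffOn ℝ 2 u O) (hx : x ∈ O)
    (e : Fin n → ℝ) :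
    fderiv ℝ (jet u) x e = (e, fderiv ℝ u x e, fun k => fderiv ℝ (pd k u) x e) := by
  have hasFDerivAt_of {f : (Fin n → ℝ) → ℝ} (hf : ContDiffOn ℝ 1 f O) :
      HasFDerivAt f (fderiv ℝ f x) x :=
    ((hf.contDiffAt (hO.mem_nhds hx)).differentiableAt one_ne_zero).hasFDerivAt
  have hgrad : HasFDerivAt (grad u) (ContinuousLinearMap.pi fun k => fderiv ℝ (pd k u) x) x :=
    hasFDerivAt_pi.2 fun k => hasFDerivAt_of (contDiffOn_pd hO hu (by norm_num) k)
  have hjet := (hasFDerivAt_id x).prodMk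
    ((hasFDerivAt_of (hu.of_le (by norm_num))).prodMk hgrad)
  exact congrArg (· e) hjet.fderiv

theorem pd_comp_jet (hO : IsOpen O) (hu : ContDiffOn ℝ 2 u O) (hx : x ∈ O)
    {G : JetSpace n → ℝ} (hG : DifferentiableAt ℝ G (jet u x)) (m : Fin n) :
    pd m (fun y => G (jet u y)) x =
      baseDeriv m G (jet u x) + ∑ k, pd m (pd k u) x * gradientDeriv k G (jet u x) := by
  have chain := (hG.hasFDerivAt.comp x (hasFDerivAt_jet hO hu hx)).fderiv
  calc pd m (fun y => G (jet u y)) x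
      = fderiv ℝ G (jet u x) (fderiv ℝ (jet u) x (Pi.single m 1)) :=
        congrArg (· (Pi.single m 1)) chain
    _ = _ := by
        rw [fderiv_jet_apply hO hu hx, fderiv_apply_eq_add_sum_gradientDeriv]
        rfl

theorem sum_pd_newtonT_one {A : (Fin n → ℝ) → Matrix (Fin n) (Fin n) ℝ}
    (hA : ∀ i j, DifferentiableAt ℝ (fun y => A y i j) x) (j : Fin n) :
    ∑ i, pd i (fun y => newtonT 1 (A y) i j) x =
      ∑ i, (pd j (fun y => A y i i) x - pd i (fun y => A y i j) x) := by
  have pd_entry (i : Fin n) : pd i (fun y => newtonT 1 (A y) i j) x =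
      (∑ k, pd i (fun y => A y k k) x) * (1 : Matrix (Fin n) (Fin n) ℝ) i j -
        pd i (fun y => A y i j) x := by
    have hsum : DifferentiableAt ℝ (fun y => ∑ k, A y k k) x :=
      DifferentiableAt.fun_sum fun k _ => hA k k
    simp only [newtonT_one_apply]
    rw [pd_sub (hsum.mul_const _) (hA i j), pd_mul hsum (differentiableAt_const _),
      pd_sum fun k _ => hA k k]
    simp [pd, mul_comm]
  simp [pd_entry, Matrix.one_apply, Finset.sum_sub_distrib]

theorem sum_pd_newtonT_one_augHess {H : JetSpace n → Matrix (Fin n) (Fin n) ℝ} (hO : IsOpen O)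
    (hu : ContDiffOn ℝ 3 u O) (hx : x ∈ O)
    (hH : ∀ i j, DifferentiableAt ℝ (fun y => H (jet u y) i j) x) (j : Fin n) :
    ∑ i, pd i (fun y => newtonT 1 (augHess H u y) i j) x =
      ∑ i, (pd i (fun y => H (jet u y) i j) x - pd j (fun y => H (jet u y) i i) x) := by
  have hu' (i : Fin n) : ContDiffOn ℝ 2 (pd i u) O := contDiffOn_pd hO hu (by norm_num) i
  have hhess (i j : Fin n) : DifferentiableAt ℝ (fun y => hess u y i j) x :=
    ((contDiffOn_pd (m := 1) hO (hu' j) (by norm_num) i).contDiffAt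
      (hO.mem_nhds hx)).differentiableAt one_ne_zero
  have third_comm (i : Fin n) :
      pd i (fun y => hess u y i j) x = pd j (fun y => hess u y i i) x :=
    calc pd i (pd i (pd j u)) x = pd i (pd j (pd i u)) x :=
          pd_congr (Filter.eventually_of_mem (hO.mem_nhds hx) fun y hy =>
            pd_comm hO (hu.of_le (by norm_num)) hy i j) i
      _ = pd j (pd i (pd i u)) x := pd_comm hO (hu' i) hx i j
  rw [sum_pd_newtonT_one (A := augHess H u) fun i j => (hhess i j).fun_sub (hH i j)]
  refine Finset.sum_congr rfl fun i _ => ?_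
  simp only [augHess, Matrix.sub_apply]
  rw [pd_sub (hhess i i) (hH i i), pd_sub (hhess i j) (hH i j), third_comm]
  ring

end Jets

section LineDerivative

variable {E F : Type*} [NormedAddCommGroup E] [NormedSpace ℝ E] [NormedAddCommGroup F]
  [NormedSpace ℝ F] {O : Set E} {K : Set F}

theorem abs_lineDeriv_comp_le {G : F → ℝ} {J : E → F} {x e : E} {L : NNReal} (hO : O ∈ nhds x)
    (hG : LipschitzOnWith L G K) (hJ : DifferentiableAt ℝ J x) (hJK : MapsTo J O K) :
    |lineDeriv ℝ (fun y => G (J y)) x e| ≤ L * ‖fderiv ℝ J x e‖ := by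
  by_cases hd : LineDifferentiableAt ℝ (fun y => G (J y)) x e
  swap
  · rw [lineDeriv_zero_of_not_lineDifferentiableAt hd, abs_zero]
    positivity
  have slopes_comp := (hasDerivAt_iff_tendsto_slope.1 hd.hasLineDerivAt).norm
  have slopes := (hasDerivAt_iff_tendsto_slope.1 (hJ.hasFDerivAt.hasLineDerivAt e)).norm
  have hmem : ∀ᶠ t : ℝ in nhds 0, x + t • e ∈ O :=
    (show ContinuousAt (fun t : ℝ => x + t • e) 0 by fun_prop).eventually_mem (by simpa using hO)
  refine le_of_tendsto_of_tendsto slopes_comp (slopes.const_mul _) ?_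
  filter_upwards [hmem.filter_mono nhdsWithin_le_nhds] with t ht
  rw [slope_def_module, slope_def_module, norm_smul, norm_smul, mul_left_comm]
  gcongr
  simpa [dist_eq_norm] using
    hG.dist_le_mul _ (hJK ht) _ (hJK (show x + (0 : ℝ) • e ∈ O by simpa using mem_of_mem_nhds hO))

end LineDerivative

/-! ### Coefficients of the cancellation identity -/

section Coefficients

variable {n : ℕ}

/-- The coefficient of `(∂_k ∂_i u) ∂_m v` in the cancellation identity. -/
noncomputable def leadingCoeff (H : JetSpace n → Matrix (Fin n) (Fin n) ℝ) (i k m : Fin n)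
    (y : JetSpace n) : ℝ :=
  gradientDeriv k (fun y => H y i m) y - gradientDeriv m (fun y => H y i k) y +
    ((1 : Matrix (Fin n) (Fin n) ℝ) i k * ∑ j, gradientDeriv m (fun y => H y j j) y -
      (1 : Matrix (Fin n) (Fin n) ℝ) i m * ∑ j, gradientDeriv k (fun y => H y j j) y)

/-- The coefficient of `∂_m v` in the cancellation identity. -/
noncomputable def lowerCoeff (H : JetSpace n → Matrix (Fin n) (Fin n) ℝ) (m : Fin n)
    (y : JetSpace n) : ℝ :=
  ∑ i, (baseDeriv i (fun y => H y i m) y - baseDeriv m (fun y => H y i i) y) -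
    ∑ i, ∑ j, newtonT 1 (H y) i j * gradientDeriv m (fun y => H y i j) y

theorem leadingCoeff_swap (H : JetSpace n → Matrix (Fin n) (Fin n) ℝ) (i k m : Fin n)
    (y : JetSpace n) : leadingCoeff H i m k y = -leadingCoeff H i k m y := by
  simp only [leadingCoeff]
  ring

/-- The entries of `H` and their derivatives: the coefficients of the cancellation identity are
polynomials in these data. -/
noncomputable def coeffData (H : JetSpace n → Matrix (Fin n) (Fin n) ℝ) (y : JetSpace n) :
    (Fin n → Fin n → ℝ) × (Fin n → Fin n → JetSpace n →L[ℝ] ℝ) × JetSpace n :=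
  (fun i j => H y i j, fun i j => fderiv ℝ (fun y => H y i j) y, y)

/-- `f` is bounded by `L` and `L`-Lipschitz on `K`. -/
structure BddLipschitzOn {E F : Type*} [NormedAddCommGroup E] [NormedAddCommGroup F] (L : NNReal)
    (f : E → F) (K : Set E) : Prop where
  norm_le : ∀ y ∈ K, ‖f y‖ ≤ L
  lipschitzOnWith : LipschitzOnWith L f K

/-- A bound `L` for all the coefficients on `K`; every constant of the estimate is built from it. -/
structure CoeffBound (H : JetSpace n → Matrix (Fin n) (Fin n) ℝ) (K : Set (JetSpace n))
    (L : NNReal) : Prop where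
  differentiableAt : ∀ y ∈ K, ∀ i j, DifferentiableAt ℝ (fun y => H y i j) y
  entry : ∀ i j, BddLipschitzOn L (fun y => H y i j) K
  fderiv_entry : ∀ i j, BddLipschitzOn L (fderiv ℝ fun y => H y i j) K
  leading : ∀ i k m, BddLipschitzOn L (leadingCoeff H i k m) K
  lower : ∀ m, BddLipschitzOn L (lowerCoeff H m) K

theorem eventually_bddLipschitzOn_comp {E F G : Type*} [NormedAddCommGroup E]
    [NormedAddCommGroup F] [NormedSpace ℝ F] [NormedAddCommGroup G] [NormedSpace ℝ G]
    {K : Set E} (hK : IsCompact K) {f : E → F} {L₀ : NNReal} (hf : LipschitzOnWith L₀ f K)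
    {Φ : F → G} (hΦ : ContDiff ℝ 1 Φ) :
    ∀ᶠ L : NNReal in Filter.atTop, BddLipschitzOn L (fun y => Φ (f y)) K := by
  have hcont : ContinuousOn (fun y => Φ (f y)) K := hΦ.continuous.comp_continuousOn hf.continuousOn
  obtain ⟨b, hb⟩ := hK.exists_bound_of_continuousOn hcont
  obtain ⟨L₁, hL₁⟩ := hΦ.locallyLipschitz.locallyLipschitzOn.exists_lipschitzOnWith_of_compact
    (hK.image_of_continuousOn hf.continuousOn)
  filter_upwards [Filter.eventually_ge_atTop b.toNNReal,
    Filter.eventually_ge_atTop (L₁ * L₀)] with L hbL hL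
  exact ⟨fun y hy => (hb y hy).trans (Real.toNNReal_le_iff_le_coe.1 hbL),
    (hL₁.comp hf (mapsTo_image f K)).weaken hL⟩

theorem exists_lipschitzOnWith_pi {ι E : Type*} {F : ι → Type*} [Fintype ι]
    [PseudoEMetricSpace E] [∀ i, PseudoEMetricSpace (F i)] {f : E → ∀ i, F i} {K : Set E}
    (hf : ∀ i, ∃ L, LipschitzOnWith L (fun y => f y i) K) : ∃ L, LipschitzOnWith L f K := by
  choose L hL using hf
  refine ⟨Finset.univ.sup L, fun y hy z hz => edist_pi_le_iff.2 fun i => ?_⟩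
  exact (hL i).weaken (Finset.le_sup (Finset.mem_univ i)) hy hz

theorem exists_lipschitzOnWith_coeffData {H : JetSpace n → Matrix (Fin n) (Fin n) ℝ}
    {U K : Set (JetSpace n)} (hU : IsOpen U) (hH : ∀ i j, C11On (fun y => H y i j) U)
    (hK : IsCompact K) (hKc : Convex ℝ K) (hKU : K ⊆ U) :
    ∃ L, LipschitzOnWith L (coeffData H) K := by
  have entry (i j : Fin n) : ∃ L, LipschitzOnWith L (fun y => H y i j) K :=
    ((hH i j).1.mono hKU).exists_lipschitzOnWith one_ne_zero hKc hK
  have deriv (i j : Fin n) : ∃ L, LipschitzOnWith L (fderiv ℝ fun y => H y i j) K := by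
    have hloc : LocallyLipschitzOn U (fderivWithin ℝ (fun y => H y i j) U) :=
      fun y hy => (hH i j).2 y hy
    obtain ⟨L, hL⟩ := (hloc.mono hKU).exists_lipschitzOnWith_of_compact hK
    exact ⟨L, fun y hy z hz => by
      simpa only [fderivWithin_of_isOpen hU (hKU hy), fderivWithin_of_isOpen hU (hKU hz)] using
        hL hy hz⟩
  obtain ⟨L₁, hL₁⟩ := exists_lipschitzOnWith_pi fun i => exists_lipschitzOnWith_pi (entry i)
  obtain ⟨L₂, hL₂⟩ := exists_lipschitzOnWith_pi fun i => exists_lipschitzOnWith_pi (deriv i)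
  exact ⟨_, hL₁.prodMk (hL₂.prodMk (LipschitzWith.id.lipschitzOnWith))⟩

theorem exists_coeffBound {H : JetSpace n → Matrix (Fin n) (Fin n) ℝ}
    {U K : Set (JetSpace n)} (hU : IsOpen U) (hH : ∀ i j, C11On (fun y => H y i j) U)
    (hK : IsCompact K) (hKc : Convex ℝ K) (hKU : K ⊆ U) : ∃ L, CoeffBound H K L := by
  obtain ⟨L₀, hL₀⟩ := exists_lipschitzOnWith_coeffData hU hH hK hKc hKU
  have smooth {G : Type} [NormedAddCommGroup G] [NormedSpace ℝ G]
      {Φ : (Fin n → Fin n → ℝ) × (Fin n → Fin n → JetSpace n →L[ℝ] ℝ) × JetSpace n → G}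
      (hΦ : ContDiff ℝ 1 Φ) :
      ∀ᶠ L : NNReal in Filter.atTop, BddLipschitzOn L (fun y => Φ (coeffData H y)) K :=
    eventually_bddLipschitzOn_comp hK hL₀ hΦ
  have entry : ∀ᶠ L : NNReal in Filter.atTop, ∀ i j, BddLipschitzOn L (fun y => H y i j) K :=
    Filter.eventually_all.2 fun i => Filter.eventually_all.2 fun j =>
      smooth (Φ := fun p => p.1 i j) (by fun_prop)
  have deriv : ∀ᶠ L : NNReal in Filter.atTop, ∀ i j,
      BddLipschitzOn L (fderiv ℝ fun y => H y i j) K :=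
    Filter.eventually_all.2 fun i => Filter.eventually_all.2 fun j =>
      smooth (Φ := fun p => p.2.1 i j) (by fun_prop)
  have leading : ∀ᶠ L : NNReal in Filter.atTop, ∀ i k m,
      BddLipschitzOn L (leadingCoeff H i k m) K :=
    Filter.eventually_all.2 fun i => Filter.eventually_all.2 fun k =>
      Filter.eventually_all.2 fun m => smooth (Φ := fun p =>
        p.2.1 i m (0, 0, Pi.single k 1) - p.2.1 i k (0, 0, Pi.single m 1) +
          ((1 : Matrix (Fin n) (Fin n) ℝ) i k * ∑ j, p.2.1 j j (0, 0, Pi.single m 1) -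
            (1 : Matrix (Fin n) (Fin n) ℝ) i m * ∑ j, p.2.1 j j (0, 0, Pi.single k 1)))
        (by fun_prop)
  have lower : ∀ᶠ L : NNReal in Filter.atTop, ∀ m, BddLipschitzOn L (lowerCoeff H m) K := by
    refine Filter.eventually_all.2 fun m => ?_
    unfold lowerCoeff
    simp only [newtonT_one_apply]
    exact smooth (Φ := fun p =>
      ∑ i, (p.2.1 i m (Pi.single i 1, p.2.2.2.2 i, 0) -
          p.2.1 i i (Pi.single m 1, p.2.2.2.2 m, 0)) -
        ∑ i, ∑ j, ((∑ k, p.1 k k) * (1 : Matrix (Fin n) (Fin n) ℝ) i j - p.1 i j) *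
          p.2.1 i j (0, 0, Pi.single m 1)) (by fun_prop)
  obtain ⟨L, hentry, hderiv, hleading, hlower⟩ :=
    (entry.and (deriv.and (leading.and lower))).exists
  refine ⟨L, fun y hy i j => ?_, hentry, hderiv, hleading, hlower⟩
  exact ((hH i j).1.contDiffAt (hU.mem_nhds (hKU hy))).differentiableAt one_ne_zero

end Coefficients

/-! ### The cancellation identity -/

section Cancellation

variable {n : ℕ} {O : Set (Fin n → ℝ)} {u v : (Fin n → ℝ) → ℝ} {x : Fin n → ℝ}
  {H : JetSpace n → Matrix (Fin n) (Fin n) ℝ}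

theorem sum_sum_mul_eq_zero_of_antisymm {ι : Type*} [Fintype ι] {a s : ι → ι → ℝ}
    (ha : ∀ k m, a m k = -a k m) (hs : ∀ k m, s m k = s k m) :
    ∑ k, ∑ m, a k m * s k m = 0 := by
  have swap : ∑ k, ∑ m, a k m * s k m = -∑ k, ∑ m, a k m * s k m :=
    calc ∑ k, ∑ m, a k m * s k m = ∑ m, ∑ k, a k m * s k m := Finset.sum_comm
      _ = -∑ k, ∑ m, a k m * s k m := by
        simp only [← Finset.sum_neg_distrib, ← neg_mul, ← ha, hs]
  linarith

theorem sum_hess_mul_gradientDeriv_add_eq {U : Matrix (Fin n) (Fin n) ℝ} (hU : U.IsSymm)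
    (y : JetSpace n) (m : Fin n) :
    ∑ i, (∑ k, U i k * gradientDeriv k (fun y => H y i m) y -
        ∑ k, U m k * gradientDeriv k (fun y => H y i i) y) +
      ∑ i, ∑ j, newtonT 1 U i j * gradientDeriv m (fun y => H y i j) y =
    ∑ i, ∑ k, leadingCoeff H i k m y * U k i := by
  have trace_term : ∑ i, ∑ k, U m k * gradientDeriv k (fun y => H y i i) y =
      ∑ k, U m k * ∑ i, gradientDeriv k (fun y => H y i i) y := by
    simp only [Finset.mul_sum]
    exact Finset.sum_comm
  simp only [leadingCoeff, newtonT_one_apply, hU.apply, add_mul, sub_mul, Matrix.one_apply,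
    Finset.sum_add_distrib, Finset.sum_sub_distrib, trace_term, ite_mul, mul_ite, one_mul, mul_one,
    zero_mul, mul_zero, Finset.sum_ite_eq, Finset.sum_ite_eq', Finset.mem_univ, if_true,
    Finset.sum_const_zero, Finset.sum_ite_irrel]
  rw [← Finset.mul_sum, ← Finset.mul_sum]
  simp only [mul_comm]
  ring

theorem isSymm_hess (hO : IsOpen O) (hu : ContDiffOn ℝ 2 u O) (hx : x ∈ O) :
    (hess u x).IsSymm :=
  Matrix.IsSymm.ext fun i j => pd_comm hO hu hx j i

theorem sum_pd_newtonT_add_eq (hO : IsOpen O) (hu : ContDiffOn ℝ 3 u O) (hx : x ∈ O)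
    (hH : ∀ i j, DifferentiableAt ℝ (fun y => H y i j) (jet u x)) (m : Fin n) :
    ∑ i, pd i (fun y => newtonT 1 (augHess H u y) i m) x +
      ∑ i, ∑ j, newtonT 1 (augHess H u x) i j * gradientDeriv m (fun y => H y i j) (jet u x) =
    ∑ i, ∑ k, leadingCoeff H i k m (jet u x) * hess u x k i + lowerCoeff H m (jet u x) := by
  have newtonT_augHess (i j : Fin n) : newtonT 1 (augHess H u x) i j =
      newtonT 1 (hess u x) i j - newtonT 1 (H (jet u x)) i j := by
    simp only [newtonT_one_apply, augHess, Matrix.sub_apply, Finset.sum_sub_distrib]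
    ring
  have hu₂ : ContDiffOn ℝ 2 u O := hu.of_le (by norm_num)
  rw [sum_pd_newtonT_one_augHess hO hu hx fun i j =>
      ((hH i j).hasFDerivAt.comp x (hasFDerivAt_jet hO hu₂ hx)).differentiableAt,
    ← sum_hess_mul_gradientDeriv_add_eq (isSymm_hess hO hu₂ hx), lowerCoeff]
  simp only [pd_comp_jet hO hu₂ hx (hH _ _), newtonT_augHess, sub_mul, Finset.sum_add_distrib,
    Finset.sum_sub_distrib, hess, Matrix.of_apply]
  ring

theorem pd_max_zero_rpow {q : ℝ} (hq : 1 < q) (hv : DifferentiableAt ℝ v x) (m : Fin n) :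
    pd m (fun y => max (v y) 0 ^ q) x = q * max (v x) 0 ^ (q - 1) * pd m v x :=
  congrArg (· (Pi.single m 1))
    ((hasDerivAt_max_zero_rpow hq (v x)).comp_hasFDerivAt x hv.hasFDerivAt).fderiv

/-- Since `a_ikm` is antisymmetric in `k`, `m`, moving `∂_m` off `v` produces no third derivatives
of `u`. -/
theorem mul_sum_mul_pd_eq_sum_mul_pd {q : ℝ} (hq : 1 < q) (hO : IsOpen O)
    (hu : ContDiffOn ℝ 3 u O) (hx : x ∈ O) (hv : DifferentiableAt ℝ v x)
    {a : Fin n → Fin n → Fin n → ℝ} (ha : ∀ i k m, a i m k = -a i k m) (b : Fin n → ℝ) :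
    q * (max (v x) 0 ^ (q - 1) * ∑ m, (∑ i, ∑ k, a i k m * hess u x k i + b m) * pd m v x) =
      ∑ m, (∑ i, ∑ k, a i k m * pd m (fun y => hess u y k i * max (v y) 0 ^ q) x +
        b m * pd m (fun y => max (v y) 0 ^ q) x) := by
  have hu' (i : Fin n) : ContDiffOn ℝ 2 (pd i u) O := contDiffOn_pd hO hu (by norm_num) i
  have hhess (k i : Fin n) : DifferentiableAt ℝ (fun y => hess u y k i) x :=
    ((contDiffOn_pd (m := 1) hO (hu' i) (by norm_num) k).contDiffAt
      (hO.mem_nhds hx)).differentiableAt one_ne_zero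
  have hpow : DifferentiableAt ℝ (fun y => max (v y) 0 ^ q) x :=
    ((hasDerivAt_max_zero_rpow hq (v x)).comp_hasFDerivAt x hv.hasFDerivAt).differentiableAt
  have third_order : ∑ m, ∑ i, ∑ k, a i k m * pd m (fun y => hess u y k i) x = 0 := by
    rw [Finset.sum_comm]
    refine Finset.sum_eq_zero fun i _ => ?_
    rw [Finset.sum_comm]
    exact sum_sum_mul_eq_zero_of_antisymm (ha i) fun k m => pd_comm hO (hu' i) hx k m
  have product (i k m : Fin n) : a i k m * pd m (fun y => hess u y k i * max (v y) 0 ^ q) x =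
      a i k m * hess u x k i * pd m (fun y => max (v y) 0 ^ q) x +
        max (v x) 0 ^ q * (a i k m * pd m (fun y => hess u y k i) x) := by
    rw [pd_mul (hhess k i) hpow]
    ring
  simp only [product, Finset.sum_add_distrib, ← Finset.mul_sum, third_order, mul_zero, add_zero,
    ← Finset.sum_mul, pd_max_zero_rpow hq hv]
  rw [Finset.mul_sum, Finset.mul_sum, ← Finset.sum_add_distrib]
  exact Finset.sum_congr rfl fun m _ => by ring

end Cancellation

/-! ### Discrete Laplacians of jet compositions -/

section DiscreteLaplacian

variable {n : ℕ} {x₀ x : Fin n → ℝ} {r r' h : ℝ} {f : (Fin n → ℝ) → ℝ}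

/-- The discrete Laplacian `∑ₗ Δₗₗʰ f`. -/
noncomputable def discLapl (h : ℝ) (f : (Fin n → ℝ) → ℝ) (x : Fin n → ℝ) : ℝ :=
  ∑ l, ddq l h f x

theorem norm_smul_single (a : ℝ) (l : Fin n) : ‖a • (Pi.single l 1 : Fin n → ℝ)‖ = |a| := by
  rw [norm_smul, Pi.norm_single, norm_one, mul_one, Real.norm_eq_abs]

theorem mapsTo_add_smul_single (hr : r + |h| ≤ r') {a : ℝ} (ha : |a| = |h|) (l : Fin n) :
    MapsTo (fun y => y + a • (Pi.single l 1 : Fin n → ℝ)) (ball x₀ r) (ball x₀ r') := by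
  intro y hy
  rw [mem_ball, dist_eq_norm, add_sub_right_comm]
  linarith [norm_add_le (y - x₀) (a • (Pi.single l 1 : Fin n → ℝ)), mem_ball_iff_norm.1 hy,
    norm_smul_single a l]

theorem ddq_eq_add (l : Fin n) (h : ℝ) (f : (Fin n → ℝ) → ℝ) :
    ddq l h f = fun x =>
      (f (x + h • Pi.single l 1) - 2 * f x + f (x + (-h) • Pi.single l 1)) / h ^ 2 :=
  funext fun x => by rw [ddq, neg_smul, sub_eq_add_neg x]

theorem add_sub_add_eq_sq_mul_ddq (hh : h ≠ 0) (l : Fin n) (f : (Fin n → ℝ) → ℝ) (x : Fin n → ℝ) :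
    f (x + h • Pi.single l 1) - 2 * f x + f (x + (-h) • Pi.single l 1) = h ^ 2 * ddq l h f x := by
  rw [ddq_eq_add, mul_div_cancel₀ _ (pow_ne_zero 2 hh)]

theorem contDiffOn_ddq {k : WithTop ℕ∞} (hr : r + |h| ≤ r') (hf : ContDiffOn ℝ k f (ball x₀ r'))
    (l : Fin n) : ContDiffOn ℝ k (ddq l h f) (ball x₀ r) := by
  have shift {a : ℝ} (ha : |a| = |h|) :
      ContDiffOn ℝ k (fun y => f (y + a • Pi.single l 1)) (ball x₀ r) :=
    hf.comp (contDiffOn_id.add contDiffOn_const) (mapsTo_add_smul_single hr ha l)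
  have hfr : ContDiffOn ℝ k f (ball x₀ r) :=
    hf.mono (ball_subset_ball (by linarith [abs_nonneg h]))
  rw [ddq_eq_add]
  exact (((shift rfl).sub (contDiffOn_const.mul hfr)).add (shift (abs_neg h))).div_const _

theorem contDiffOn_discLapl {k : WithTop ℕ∞} (hr : r + |h| ≤ r')
    (hf : ContDiffOn ℝ k f (ball x₀ r')) : ContDiffOn ℝ k (discLapl h f) (ball x₀ r) :=
  ContDiffOn.sum fun l _ => contDiffOn_ddq hr hf l

theorem pd_discLapl (hr : r + |h| ≤ r') (hf : ContDiffOn ℝ 1 f (ball x₀ r'))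
    (hx : x ∈ ball x₀ r) (k : Fin n) : pd k (discLapl h f) x = discLapl h (pd k f) x := by
  have hasFDerivAt_of {y : Fin n → ℝ} (hy : y ∈ ball x₀ r') : HasFDerivAt f (fderiv ℝ f y) y :=
    ((hf.contDiffAt (isOpen_ball.mem_nhds hy)).differentiableAt one_ne_zero).hasFDerivAt
  have shift {a : ℝ} (ha : |a| = |h|) (l : Fin n) :
      HasFDerivAt (fun y => f (y + a • Pi.single l 1)) (fderiv ℝ f (x + a • Pi.single l 1)) x :=
    (hasFDerivAt_comp_add_right _).2 (hasFDerivAt_of (mapsTo_add_smul_single hr ha l hx))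
  have hx' : x ∈ ball x₀ r' := ball_subset_ball (by linarith [abs_nonneg h]) hx
  have derivative (l : Fin n) := (((shift rfl l).fun_sub ((hasFDerivAt_of hx').const_mul 2)).fun_add
    (shift (abs_neg h) l)).mul_const (h ^ 2)⁻¹
  simp only [← div_eq_mul_inv] at derivative
  unfold discLapl
  rw [pd_sum fun l _ => (contDiffOn_ddq hr hf l).contDiffAt (isOpen_ball.mem_nhds hx)
    |>.differentiableAt one_ne_zero]
  refine Finset.sum_congr rfl fun l _ => ?_
  simp only [ddq_eq_add]
  rw [pd, (derivative l).fderiv]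
  simp only [pd, div_eq_inv_mul, _root_.smul_apply, _root_.add_apply, _root_.sub_apply, smul_eq_mul]

end DiscreteLaplacian

section HessBound

variable {n : ℕ} {O : Set (Fin n → ℝ)} {u w : (Fin n → ℝ) → ℝ} {M : ℝ} {x x₀ : Fin n → ℝ}
  {r r' h : ℝ} {K : Set (JetSpace n)} {G : JetSpace n → ℝ} {L : NNReal}

/-- The one-jets of `u` are bounded by `M` on `O`, and its second derivatives by `w ≥ 1`. -/
structure HessBound (u w : (Fin n → ℝ) → ℝ) (M : ℝ) (O : Set (Fin n → ℝ)) : Prop where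
  contDiffOn : ContDiffOn ℝ 3 u O
  continuousOn : ContinuousOn w O
  one_le : ∀ x ∈ O, 1 ≤ w x
  abs_apply_le : ∀ x ∈ O, |u x| ≤ M
  abs_pd_le : ∀ x ∈ O, ∀ i, |pd i u x| ≤ M
  abs_pd_pd_le : ∀ x ∈ O, ∀ i j, |pd i (pd j u) x| ≤ w x

/-- What remains of the discrete Laplacian of `G ∘ jet u` after the difference quotients of `∇u`
have been split off by the chain rule. -/
noncomputable def discLaplRemainder (h : ℝ) (G : JetSpace n → ℝ) (u : (Fin n → ℝ) → ℝ)
    (x : Fin n → ℝ) : ℝ :=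
  discLapl h (fun y => G (jet u y)) x - ∑ k, gradientDeriv k G (jet u x) * discLapl h (pd k u) x

/-- The set of one-jets over a closed ball whose value and gradient are bounded by `M`. -/
def jetBox (x₀ : Fin n → ℝ) (r M : ℝ) : Set (JetSpace n) :=
  closedBall x₀ r ×ˢ Icc (-M) M ×ˢ closedBall 0 M

theorem isCompact_jetBox : IsCompact (jetBox x₀ r M) :=
  (isCompact_closedBall _ _).prod (isCompact_Icc.prod (isCompact_closedBall _ _))

theorem convex_jetBox : Convex ℝ (jetBox x₀ r M) :=
  (convex_closedBall _ _).prod ((convex_Icc _ _).prod (convex_closedBall _ _))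

namespace HessBound

theorem mono {O' : Set (Fin n → ℝ)} (hu : HessBound u w M O) (hO : O' ⊆ O) :
    HessBound u w M O' where
  contDiffOn := hu.contDiffOn.mono hO
  continuousOn := hu.continuousOn.mono hO
  one_le x hx := hu.one_le x (hO hx)
  abs_apply_le x hx := hu.abs_apply_le x (hO hx)
  abs_pd_le x hx := hu.abs_pd_le x (hO hx)
  abs_pd_pd_le x hx := hu.abs_pd_pd_le x (hO hx)

theorem nonneg (hu : HessBound u w M O) (hx : x ∈ O) : 0 ≤ M :=
  (abs_nonneg _).trans (hu.abs_apply_le x hx)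

theorem mapsTo_jet (hu : HessBound u w M O) (hO : O ⊆ closedBall x₀ r) :
    MapsTo (jet u) O (jetBox x₀ r M) := fun x hx =>
  ⟨hO hx, abs_le.1 (hu.abs_apply_le x hx), mem_closedBall_zero_iff.2 <|
    (pi_norm_le_iff_of_nonneg (hu.nonneg hx)).2 (hu.abs_pd_le x hx)⟩

theorem norm_fderiv_jet_le (hu : HessBound u w M O) (hO : IsOpen O) (hx : x ∈ O) (m : Fin n) :
    ‖fderiv ℝ (jet u) x (Pi.single m 1)‖ ≤ (1 + M) * w x := by
  have hM := hu.nonneg hx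
  have hw := hu.one_le x hx
  rw [fderiv_jet_apply hO (hu.contDiffOn.of_le (by norm_num)) hx]
  refine norm_prod_le_iff.2 ⟨?_, norm_prod_le_iff.2
    ⟨?_, (pi_norm_le_iff_of_nonneg (by positivity)).2 fun k => ?_⟩⟩
  · rw [Pi.norm_single, norm_one]
    nlinarith
  · exact (hu.abs_pd_le x hx m).trans (by nlinarith)
  · exact (hu.abs_pd_pd_le x hx m k).trans (by nlinarith)

theorem norm_jet_add_sub_le (hu : HessBound u w M O) (hO : IsOpen O) {a : ℝ} {l : Fin n}
    (hxe : MapsTo (fun t : ℝ => x + t • (a • (Pi.single l 1 : Fin n → ℝ))) (Icc 0 1) O) :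
    ‖jet u (x + a • Pi.single l 1) - jet u x‖ ≤
      |a| * (1 + M) * segAvg w (a • Pi.single l 1) x := by
  refine norm_add_sub_le_mul_segAvg hO hxe
    ((contDiffOn_jet hO (hu.contDiffOn.of_le (by norm_num))).differentiableOn one_ne_zero)
    hu.continuousOn fun y hy => ?_
  rw [map_smul, norm_smul, Real.norm_eq_abs, mul_assoc]
  gcongr
  exact hu.norm_fderiv_jet_le hO hy l

theorem abs_ddq_comp_jet_sub_le (hu : HessBound u w M (ball x₀ r')) (hh : h ≠ 0)
    (hr : r + |h| < r') (hx : x ∈ closedBall x₀ r) (hK : Convex ℝ K)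
    (hG : ∀ y ∈ K, DifferentiableAt ℝ G y) (hG' : LipschitzOnWith L (fderiv ℝ G) K)
    (huK : MapsTo (jet u) (ball x₀ r') K) (l : Fin n) :
    |ddq l h (fun y => G (jet u y)) x -
        fderiv ℝ G (jet u x) (0, ddq l h u x, fun k => ddq l h (pd k u) x)| ≤
      L * (1 + M) ^ 2 * (segAvg w (h • Pi.single l 1) x ^ 2 +
        segAvg w (-h • Pi.single l 1) x ^ 2) := by
  have step {a : ℝ} (ha : |a| = |h|) := mapsTo_add_smul_ball (e := a • (Pi.single l 1 : Fin n → ℝ))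
    hx (by rwa [norm_smul_single, ha])
  have shift_mem {a : ℝ} (ha : |a| = |h|) : jet u (x + a • Pi.single l 1) ∈ K := by
    simpa using huK (step ha (right_mem_Icc.2 zero_le_one))
  have increment {a : ℝ} (ha : |a| = |h|) : ‖jet u (x + a • Pi.single l 1) - jet u x‖ ≤
      |h| * (1 + M) * segAvg w (a • Pi.single l 1) x :=
    ha ▸ hu.norm_jet_add_sub_le isOpen_ball (step ha)
  have hxK : jet u x ∈ K := by simpa using huK (step rfl (left_mem_Icc.2 zero_le_one))
  have jet_difference : jet u (x + h • Pi.single l 1) - (2 : ℝ) • jet u x +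
      jet u (x + -h • Pi.single l 1) =
      h ^ 2 • ((0, ddq l h u x, fun k => ddq l h (pd k u) x) : JetSpace n) := by
    refine Prod.ext ?_ (Prod.ext (add_sub_add_eq_sq_mul_ddq hh l u x)
      (funext fun k => add_sub_add_eq_sq_mul_ddq hh l (pd k u) x))
    simp only [jet, Prod.fst_add, Prod.fst_sub, Prod.smul_fst]
    module
  have second_difference :=
    abs_secondDifference_sub_fderiv_le hK hG hG' hxK (shift_mem rfl) (shift_mem (abs_neg h))
  rw [jet_difference, map_smul, smul_eq_mul,
    add_sub_add_eq_sq_mul_ddq hh l (fun y => G (jet u y)) x, ← mul_sub, abs_mul,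
    abs_of_nonneg (sq_nonneg h)] at second_difference
  refine le_of_mul_le_mul_left (second_difference.trans ?_) (show 0 < h ^ 2 by positivity)
  calc L * (‖jet u (x + h • Pi.single l 1) - jet u x‖ ^ 2 +
          ‖jet u (x + -h • Pi.single l 1) - jet u x‖ ^ 2)
      ≤ L * ((|h| * (1 + M) * segAvg w (h • Pi.single l 1) x) ^ 2 +
          (|h| * (1 + M) * segAvg w (-h • Pi.single l 1) x) ^ 2) := by
        gcongr
        exacts [increment rfl, increment (abs_neg h)]
    _ = h ^ 2 * (L * (1 + M) ^ 2 * (segAvg w (h • Pi.single l 1) x ^ 2 +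
          segAvg w (-h • Pi.single l 1) x ^ 2)) := by
        rw [mul_pow, mul_pow, mul_pow, mul_pow, sq_abs]
        ring

theorem abs_discLaplRemainder_le (hu : HessBound u w M (ball x₀ r')) (hh : h ≠ 0)
    (hr : r + |h| < r') (hx : x ∈ closedBall x₀ r) (hK : Convex ℝ K)
    (hG : ∀ y ∈ K, DifferentiableAt ℝ G y) (hG' : BddLipschitzOn L (fderiv ℝ G) K)
    (huK : MapsTo (jet u) (ball x₀ r') K) :
    |discLaplRemainder h G u x| ≤
      L * |discLapl h u x| + L * (1 + M) ^ 2 * ∑ l, (segAvg w (h • Pi.single l 1) x ^ 2 +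
        segAvg w (-h • Pi.single l 1) x ^ 2) := by
  have split : discLaplRemainder h G u x =
      discLapl h u x * fderiv ℝ G (jet u x) (0, 1, 0) + ∑ l, (ddq l h (fun y => G (jet u y)) x -
        fderiv ℝ G (jet u x) (0, ddq l h u x, fun k => ddq l h (pd k u) x)) := by
    have split_l (l : Fin n) :
        fderiv ℝ G (jet u x) (0, ddq l h u x, fun k => ddq l h (pd k u) x) =
          ddq l h u x * fderiv ℝ G (jet u x) (0, 1, 0) +
            ∑ k, gradientDeriv k G (jet u x) * ddq l h (pd k u) x := by
      rw [fderiv_apply_eq_add_sum_gradientDeriv, ← smul_eq_mul, ← map_smul]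
      simp [mul_comm]
    simp only [split_l, discLaplRemainder, discLapl, Finset.mul_sum, Finset.sum_mul,
      Finset.sum_sub_distrib, Finset.sum_add_distrib]
    rw [Finset.sum_comm]
    ring
  rw [split, Finset.mul_sum]
  refine (abs_add_le _ _).trans (add_le_add ?_ ?_)
  · have hxK : jet u x ∈ K := huK (closedBall_subset_ball (by linarith [abs_nonneg h]) hx)
    have unit : ‖((0, 1, 0) : JetSpace n)‖ = 1 := by simp
    rw [abs_mul, mul_comm]
    gcongr
    simpa only [unit, mul_one, Real.norm_eq_abs] using
      (fderiv ℝ G (jet u x)).le_of_opNorm_le (hG'.norm_le _ hxK) (0, 1, 0)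
  · exact (Finset.abs_sum_le_sum_abs _ _).trans
      (Finset.sum_le_sum fun l _ => hu.abs_ddq_comp_jet_sub_le hh hr hx hK hG
        hG'.lipschitzOnWith huK l)

end HessBound

end HessBound

/-! ### The flux term -/

section Flux

variable {n : ℕ} {u v w s η : (Fin n → ℝ) → ℝ} {x₀ : Fin n → ℝ} {r r' r'' c M q : ℝ}
  {H : JetSpace n → Matrix (Fin n) (Fin n) ℝ} {K : Set (JetSpace n)} {L : NNReal}

/-- A `C¹` cut-off function with values in `[0, 1]` which vanishes outside the ball of radius `r`
and has partial derivatives bounded by `c`. -/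
structure IsCutoff (η : (Fin n → ℝ) → ℝ) (x₀ : Fin n → ℝ) (r c : ℝ) : Prop where
  contDiff : ContDiff ℝ 1 η
  eq_zero : ∀ x ∉ ball x₀ r, η x = 0
  mem_Icc : ∀ x, 0 ≤ η x ∧ η x ≤ 1
  abs_pd_le : ∀ x j, |pd j η x| ≤ c

namespace IsCutoff

theorem tsupport_subset (hη : IsCutoff η x₀ r c) : tsupport η ⊆ closedBall x₀ r :=
  closure_minimal (fun _ hx => ball_subset_closedBall (by_contra fun h => hx (hη.eq_zero _ h)))
    isClosed_closedBall

theorem hasCompactSupport (hη : IsCutoff η x₀ r c) : HasCompactSupport η :=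
  (isCompact_closedBall x₀ r).of_isClosed_subset (isClosed_tsupport η) hη.tsupport_subset

theorem integrable_mul (hη : IsCutoff η x₀ r c) (hr : r < r') (hs : ContinuousOn s (ball x₀ r')) :
    Integrable fun x => η x * s x :=
  integrable_mul_of_tsupport_subset isOpen_ball hη.contDiff.continuous hη.hasCompactSupport
    (hη.tsupport_subset.trans (closedBall_subset_ball hr)) hs

end IsCutoff

theorem BddLipschitzOn.continuousOn_comp_jet {E : Type*} [NormedAddCommGroup E]
    {G : JetSpace n → E} {O : Set (Fin n → ℝ)} (hG : BddLipschitzOn L G K) (hO : IsOpen O)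
    (hu : ContDiffOn ℝ 2 u O) (huK : MapsTo (jet u) O K) :
    ContinuousOn (fun x => G (jet u x)) O :=
  hG.lipschitzOnWith.continuousOn.comp (contDiffOn_jet hO hu).continuousOn huK

theorem HessBound.exists_lipschitzOnWith_jet (hu : HessBound u w M (ball x₀ r'))
    (hr : r < r') : ∃ D, LipschitzOnWith D (jet u) (ball x₀ r) := by
  obtain ⟨D, hD⟩ := ((contDiffOn_jet isOpen_ball (hu.contDiffOn.of_le (by norm_num))).mono
    (closedBall_subset_ball hr)).exists_lipschitzOnWith one_ne_zero (convex_closedBall x₀ r)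
    (isCompact_closedBall x₀ r)
  exact ⟨D, hD.mono ball_subset_closedBall⟩

theorem abs_setIntegral_cutoff_mul_pd_le (hη : IsCutoff η x₀ r c)
    (hu : HessBound u w M (ball x₀ r'')) (hr : r < r') (hr' : r' < r'') {G : JetSpace n → ℝ}
    (hG : BddLipschitzOn L G K) (huK : MapsTo (jet u) (ball x₀ r'') K)
    (hs : ContDiffOn ℝ 1 s (ball x₀ r')) {g : (Fin n → ℝ) → ℝ} (hg : IntegrableOn g (ball x₀ r))
    (hsg : ∀ x ∈ ball x₀ r, w x * |s x| ≤ g x) (m : Fin n) :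
    |∫ x in ball x₀ r, η x * (G (jet u x) * pd m s x)| ≤
      (c + 1) * (L * (1 + M) * ∫ x in ball x₀ r, g x) := by
  obtain ⟨D, hD⟩ := hu.exists_lipschitzOnWith_jet hr'
  have huK' : MapsTo (jet u) (ball x₀ r') K := huK.mono_left (ball_subset_ball hr'.le)
  have mem {x : Fin n → ℝ} (hx : x ∈ ball x₀ r) : x ∈ ball x₀ r'' :=
    ball_subset_ball (hr.trans hr').le hx
  rw [← integral_const_mul]
  refine abs_setIntegral_mul_pd_le isOpen_ball measurableSet_ball hη.contDiff hη.hasCompactSupport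
    (hη.tsupport_subset.trans (closedBall_subset_ball hr)) hη.eq_zero hη.mem_Icc
    (hη.abs_pd_le · m) (hG.lipschitzOnWith.comp hD huK') hs (hg.const_mul _) (fun x hx => ?_)
    fun x hx => ?_
  all_goals
    have hM := hu.nonneg (mem hx)
    refine le_trans ?_ (mul_le_mul_of_nonneg_left (hsg x hx) (by positivity))
    rw [abs_mul, ← mul_assoc]
    gcongr
  · calc |G (jet u x)| ≤ L := hG.norm_le _ (huK (mem hx))
      _ ≤ L * (1 + M) * w x := by
        rw [mul_assoc]
        exact le_mul_of_one_le_right L.coe_nonneg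
          (one_le_mul_of_one_le_of_one_le (by linarith) (hu.one_le x (mem hx)))
  · calc |lineDeriv ℝ (fun y => G (jet u y)) x (Pi.single m 1)|
        ≤ L * ‖fderiv ℝ (jet u) x (Pi.single m 1)‖ :=
          abs_lineDeriv_comp_le (isOpen_ball.mem_nhds (mem hx)) hG.lipschitzOnWith
            (hasFDerivAt_jet isOpen_ball (hu.contDiffOn.of_le (by norm_num))
              (mem hx)).differentiableAt huK
      _ ≤ L * (1 + M) * w x := by
        rw [mul_assoc]
        gcongr
        exact hu.norm_fderiv_jet_le isOpen_ball (mem hx) m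

/-- The first-order terms in `v` which remain when the third derivatives of `u` have cancelled. -/
noncomputable def flux (H : JetSpace n → Matrix (Fin n) (Fin n) ℝ) (u v : (Fin n → ℝ) → ℝ)
    (x : Fin n → ℝ) : ℝ :=
  ∑ m, (∑ i, ∑ k, leadingCoeff H i k m (jet u x) * hess u x k i + lowerCoeff H m (jet u x)) *
    pd m v x

theorem HessBound.contDiffOn_hess (hu : HessBound u w M (ball x₀ r)) (i j : Fin n) :
    ContDiffOn ℝ 1 (fun x => hess u x i j) (ball x₀ r) :=
  contDiffOn_pd isOpen_ball
    (contDiffOn_pd (m := 2) isOpen_ball hu.contDiffOn (by norm_num) j) (by norm_num) i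

theorem setIntegral_mul_flux_eq (hη : IsCutoff η x₀ r c)
    (hu : HessBound u w M (ball x₀ r'')) (hr : r < r') (hr' : r' < r'') (hH : CoeffBound H K L)
    (huK : MapsTo (jet u) (ball x₀ r'') K) (hq : 1 < q) (hv : ContDiffOn ℝ 1 v (ball x₀ r')) :
    q * ∫ x in ball x₀ r, η x * (max (v x) 0 ^ (q - 1) * flux H u v x) =
      ∑ m, (∑ i, ∑ k, (∫ x in ball x₀ r, η x * (leadingCoeff H i k m (jet u x) *
          pd m (fun y => hess u y k i * max (v y) 0 ^ q) x)) +
        ∫ x in ball x₀ r, η x * (lowerCoeff H m (jet u x) *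
          pd m (fun y => max (v y) 0 ^ q) x)) := by
  have hpow : ContDiffOn ℝ 1 (fun x => max (v x) 0 ^ q) (ball x₀ r') :=
    (contDiff_max_zero_rpow hq).comp_contDiffOn hv
  have integrable {G : JetSpace n → ℝ} {s : (Fin n → ℝ) → ℝ} (hG : BddLipschitzOn L G K)
      (hs : ContDiffOn ℝ 1 s (ball x₀ r')) (m : Fin n) :
      IntegrableOn (fun x => η x * (G (jet u x) * pd m s x)) (ball x₀ r) :=
    (hη.integrable_mul hr <| ContinuousOn.mul
      ((hG.continuousOn_comp_jet isOpen_ball (hu.contDiffOn.of_le (by norm_num)) huK).mono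
        (ball_subset_ball hr'.le))
      (contDiffOn_pd (m := 0) isOpen_ball hs (by simp) m).continuousOn).integrableOn
  have leading (i k m : Fin n) := integrable (hH.leading i k m)
    (((hu.contDiffOn_hess k i).mono (ball_subset_ball hr'.le)).mul hpow) m
  have lower (m : Fin n) := integrable (hH.lower m) hpow m
  calc q * ∫ x in ball x₀ r, η x * (max (v x) 0 ^ (q - 1) * flux H u v x)
      = ∫ x in ball x₀ r, ∑ m, (∑ i, ∑ k, η x * (leadingCoeff H i k m (jet u x) *
            pd m (fun y => hess u y k i * max (v y) 0 ^ q) x) +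
          η x * (lowerCoeff H m (jet u x) * pd m (fun y => max (v y) 0 ^ q) x)) := by
        rw [← integral_const_mul]
        refine setIntegral_congr_fun measurableSet_ball fun x hx => ?_
        have hx' : x ∈ ball x₀ r' := ball_subset_ball hr.le hx
        simp only [← Finset.mul_sum, ← mul_add]
        rw [← mul_sum_mul_pd_eq_sum_mul_pd hq isOpen_ball hu.contDiffOn
          (ball_subset_ball hr'.le hx') ((hv.contDiffAt (isOpen_ball.mem_nhds hx')).differentiableAt
            one_ne_zero) fun i k m => leadingCoeff_swap H i k m (jet u x), flux]
        ring
    _ = _ := by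
        have leading_sum (m : Fin n) := integrable_finsetSum Finset.univ fun i _ =>
          integrable_finsetSum Finset.univ fun k _ => leading i k m
        refine (integral_finsetSum _ fun m _ => (leading_sum m).fun_add (lower m)).trans
          (Finset.sum_congr rfl fun m _ => ?_)
        rw [integral_add (leading_sum m) (lower m), integral_finsetSum _ fun i _ =>
          integrable_finsetSum _ fun k _ => leading i k m]
        simp only [integral_finsetSum _ fun k _ => leading _ k m]

theorem abs_setIntegral_mul_flux_le (hη : IsCutoff η x₀ r c)
    (hu : HessBound u w M (ball x₀ r'')) (hr : r < r') (hr' : r' < r'') (hH : CoeffBound H K L)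
    (huK : MapsTo (jet u) (ball x₀ r'') K) (hq : 1 < q) (hv : ContDiffOn ℝ 1 v (ball x₀ r')) :
    |∫ x in ball x₀ r, η x * (max (v x) 0 ^ (q - 1) * flux H u v x)| ≤
      n * (n ^ 2 + 1) * ((c + 1) * (L * (1 + M) *
        ∫ x in ball x₀ r, max (v x) 0 ^ q * w x ^ 2)) := by
  set I := (c + 1) * (L * (1 + M) * ∫ x in ball x₀ r, max (v x) 0 ^ q * w x ^ 2)
  have one_le {x : Fin n → ℝ} (hx : x ∈ ball x₀ r) : 1 ≤ w x :=
    hu.one_le x (ball_subset_ball (hr.trans hr').le hx)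
  have hpow : ContDiffOn ℝ 1 (fun x => max (v x) 0 ^ q) (ball x₀ r') :=
    (contDiff_max_zero_rpow hq).comp_contDiffOn hv
  have hpow0 (x : Fin n → ℝ) : 0 ≤ max (v x) 0 ^ q := Real.rpow_nonneg (le_max_right _ _) q
  have hg : IntegrableOn (fun x => max (v x) 0 ^ q * w x ^ 2) (ball x₀ r) :=
    integrableOn_ball hr (hpow.continuousOn.mul
      ((hu.continuousOn.mono (ball_subset_ball hr'.le)).pow 2))
  have leading_le (i k m : Fin n) : |∫ x in ball x₀ r, η x * (leadingCoeff H i k m (jet u x) *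
      pd m (fun y => hess u y k i * max (v y) 0 ^ q) x)| ≤ I := by
    refine abs_setIntegral_cutoff_mul_pd_le hη hu hr hr' (hH.leading i k m) huK
      (((hu.contDiffOn_hess k i).mono (ball_subset_ball hr'.le)).mul hpow) hg (fun x hx => ?_) m
    have hess_le : |hess u x k i| ≤ w x :=
      hu.abs_pd_pd_le x (ball_subset_ball (hr.trans hr').le hx) k i
    rw [abs_mul, abs_of_nonneg (hpow0 x), ← mul_assoc, mul_comm, sq]
    have w_nonneg : 0 ≤ w x := zero_le_one.trans (one_le hx)
    exact mul_le_mul_of_nonneg_left (mul_le_mul_of_nonneg_left hess_le w_nonneg) (hpow0 x)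
  have lower_le (m : Fin n) : |∫ x in ball x₀ r, η x * (lowerCoeff H m (jet u x) *
      pd m (fun y => max (v y) 0 ^ q) x)| ≤ I := by
    refine abs_setIntegral_cutoff_mul_pd_le hη hu hr hr' (hH.lower m) huK hpow hg
      (fun x hx => ?_) m
    rw [abs_of_nonneg (hpow0 x), mul_comm]
    exact mul_le_mul_of_nonneg_left (le_self_pow₀ (one_le hx) two_ne_zero) (hpow0 x)
  refine (le_mul_of_one_le_left (abs_nonneg _) hq.le).trans ?_
  rw [← abs_of_pos (zero_lt_one.trans hq), ← abs_mul, abs_of_pos (zero_lt_one.trans hq),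
    setIntegral_mul_flux_eq hη hu hr hr' hH huK hq hv]
  calc _ ≤ ∑ _ : Fin n, (∑ _ : Fin n, ∑ _ : Fin n, I + I) := by
        refine (Finset.abs_sum_le_sum_abs _ _).trans (Finset.sum_le_sum fun m _ =>
          (abs_add_le _ _).trans (add_le_add ?_ (lower_le m)))
        refine (Finset.abs_sum_le_sum_abs _ _).trans (Finset.sum_le_sum fun i _ =>
          (Finset.abs_sum_le_sum_abs _ _).trans (Finset.sum_le_sum fun k _ => leading_le i k m))
    _ = n * (n ^ 2 + 1) * I := by
        simp only [Finset.sum_const, Finset.card_univ, Fintype.card_fin, nsmul_eq_mul]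
        ring

end Flux

/-! ### The remainder term -/

section Remainder

variable {n : ℕ} {u v w η : (Fin n → ℝ) → ℝ} {x x₀ : Fin n → ℝ} {r r' h c M q : ℝ}
  {H : JetSpace n → Matrix (Fin n) (Fin n) ℝ} {G : JetSpace n → ℝ} {K : Set (JetSpace n)}
  {L : NNReal}

/-- The function controlling the remainder after Young's inequality: besides `v⁺` and `w`, it
involves averages of `w ^ (q + 2)` over the segments used by the difference quotients. -/
noncomputable def youngMajorant (q h : ℝ) (v w : (Fin n → ℝ) → ℝ) (x : Fin n → ℝ) : ℝ :=
  max (v x) 0 ^ (q + 2) + w x ^ (q + 2) +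
    ∑ l, (segAvg (fun y => w y ^ (q + 2)) (h • Pi.single l 1) x +
      segAvg (fun y => w y ^ (q + 2)) (-h • Pi.single l 1) x)

theorem HessBound.rpow_mul_abs_discLaplRemainder_le (hu : HessBound u w M (ball x₀ r'))
    (hh : h ≠ 0) (hr : r + |h| < r') (hx : x ∈ closedBall x₀ r) (hK : Convex ℝ K)
    (hG : ∀ y ∈ K, DifferentiableAt ℝ G y) (hG' : BddLipschitzOn L (fderiv ℝ G) K)
    (huK : MapsTo (jet u) (ball x₀ r') K) (hq : 1 < q) (hv : |v x - discLapl h u x| ≤ M) :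
    max (v x) 0 ^ (q - 1) * |discLaplRemainder h G u x| ≤
      max (v x) 0 ^ (q - 1) * (L * (1 + M) ^ 2 * (max (v x) 0 ^ 2 + 2 * w x ^ 2 +
        ∑ l, (segAvg w (h • Pi.single l 1) x ^ 2 + segAvg w (-h • Pi.single l 1) x ^ 2))) := by
  rcases le_or_gt (v x) 0 with hv0 | hv0
  · rw [max_eq_right hv0, Real.zero_rpow (by linarith), zero_mul, zero_mul]
  have hx' : x ∈ ball x₀ r' := closedBall_subset_ball (by linarith [abs_nonneg h]) hx
  have hM := hu.nonneg hx'
  have hw := hu.one_le x hx'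
  have discLapl_le : |discLapl h u x| ≤ (1 + M) ^ 2 * (v x ^ 2 + 2 * w x ^ 2) := by
    have triangle : |discLapl h u x| ≤ v x + M := by
      have := abs_sub_abs_le_abs_sub (discLapl h u x) (v x)
      rw [abs_sub_comm, abs_of_pos hv0] at this
      linarith
    calc |discLapl h u x| ≤ v x + M := triangle
      _ ≤ (1 + M) * (v x + 1) := by nlinarith
      _ ≤ (1 + M) ^ 2 * (v x ^ 2 + 2 * w x ^ 2) := by
        refine mul_le_mul (le_self_pow₀ (by linarith) two_ne_zero) ?_ (by positivity)
          (by positivity)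
        nlinarith [sq_nonneg (v x - 1), one_le_pow₀ hw (n := 2)]
  rw [max_eq_left hv0.le]
  gcongr
  refine (hu.abs_discLaplRemainder_le hh hr hx hK hG hG' huK).trans ?_
  linarith [mul_le_mul_of_nonneg_left discLapl_le L.coe_nonneg]

theorem HessBound.rpow_mul_mul_le_youngMajorant (hu : HessBound u w M (ball x₀ r'))
    (hr : r + |h| < r') (hx : x ∈ closedBall x₀ r) (hq : 1 < q) :
    max (v x) 0 ^ (q - 1) * w x * (max (v x) 0 ^ 2 + 2 * w x ^ 2 +
        ∑ l, (segAvg w (h • Pi.single l 1) x ^ 2 + segAvg w (-h • Pi.single l 1) x ^ 2)) ≤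
      (2 * n + 5) * youngMajorant q h v w x := by
  have w_nonneg : ∀ y ∈ ball x₀ r', 0 ≤ w y := fun y hy => zero_le_one.trans (hu.one_le y hy)
  have hx' : x ∈ ball x₀ r' := closedBall_subset_ball (by linarith [abs_nonneg h]) hx
  have segment {a : ℝ} (ha : |a| = |h|) (l : Fin n) := mapsTo_add_smul_ball
    (e := a • (Pi.single l 1 : Fin n → ℝ)) hx (by rwa [norm_smul_single, ha])
  have jensen {a : ℝ} (ha : |a| = |h|) (l : Fin n) :=
    segAvg_rpow_le (p := q + 2) (by linarith) (segment ha l) hu.continuousOn w_nonneg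
  refine (rpow_sub_one_mul_mul_add_sum_le hq (w_nonneg x hx') (le_max_right _ _)
    (fun l => segAvg_nonneg (segment rfl l) w_nonneg)
    (fun l => segAvg_nonneg (segment (abs_neg h) l) w_nonneg)).trans ?_
  rw [Fintype.card_fin, youngMajorant]
  gcongr with l
  exacts [jensen rfl l, jensen (abs_neg h) l]

theorem HessBound.abs_newtonT_augHess_le (hu : HessBound u w M (ball x₀ r'))
    (hx : x ∈ ball x₀ r') (hH : CoeffBound H K L) (huK : MapsTo (jet u) (ball x₀ r') K)
    (i j : Fin n) : |newtonT 1 (augHess H u x) i j| ≤ (n + 1) * ((1 + L) * w x) := by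
  refine abs_newtonT_one_le (fun k l => ?_) i j
  calc |augHess H u x k l| ≤ |hess u x k l| + |H (jet u x) k l| := abs_sub _ _
    _ ≤ w x + L := add_le_add (hu.abs_pd_pd_le x hx k l) ((hH.entry k l).norm_le _ (huK hx))
    _ ≤ (1 + L) * w x := by nlinarith [hu.one_le x hx, L.coe_nonneg]

/-- The contraction of the Newton tensor of the augmented Hessian with the remainders of the
discrete Laplacians of `H[u]`. -/
noncomputable def contractedRemainder (H : JetSpace n → Matrix (Fin n) (Fin n) ℝ) (h : ℝ)
    (u : (Fin n → ℝ) → ℝ) (x : Fin n → ℝ) : ℝ :=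
  ∑ i, ∑ j, newtonT 1 (augHess H u x) i j * discLaplRemainder h (fun y => H y i j) u x

theorem HessBound.abs_rpow_mul_contractedRemainder_le (hu : HessBound u w M (ball x₀ r'))
    (hh : h ≠ 0) (hr : r + |h| < r') (hx : x ∈ closedBall x₀ r) (hK : Convex ℝ K)
    (hH : CoeffBound H K L) (huK : MapsTo (jet u) (ball x₀ r') K) (hq : 1 < q)
    (hv : |v x - discLapl h u x| ≤ M) :
    |max (v x) 0 ^ (q - 1) * contractedRemainder H h u x| ≤
      n ^ 2 * (n + 1) * (1 + L) * (L * (1 + M) ^ 2) * (2 * n + 5) * youngMajorant q h v w x := by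
  set φ := max (v x) 0 ^ (q - 1)
  set T := max (v x) 0 ^ 2 + 2 * w x ^ 2 +
    ∑ l, (segAvg w (h • Pi.single l 1) x ^ 2 + segAvg w (-h • Pi.single l 1) x ^ 2)
  have hx' : x ∈ ball x₀ r' := closedBall_subset_ball (by linarith [abs_nonneg h]) hx
  have hw := hu.one_le x hx'
  have φ_nonneg : 0 ≤ φ := Real.rpow_nonneg (le_max_right _ _) _
  have term_le (i j : Fin n) : φ * |newtonT 1 (augHess H u x) i j *
      discLaplRemainder h (fun y => H y i j) u x| ≤
      (n + 1) * (1 + L) * (L * (1 + M) ^ 2) * (φ * w x * T) := by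
    rw [abs_mul, mul_left_comm]
    calc _ ≤ (n + 1) * ((1 + L) * w x) * (φ * (L * (1 + M) ^ 2 * T)) :=
        mul_le_mul (hu.abs_newtonT_augHess_le hx' hH huK i j)
          (hu.rpow_mul_abs_discLaplRemainder_le hh hr hx hK (hH.differentiableAt · · i j)
            (hH.fderiv_entry i j) huK hq hv) (by positivity) (by positivity)
      _ = _ := by ring
  calc |φ * contractedRemainder H h u x|
      ≤ ∑ i, ∑ j, φ * |newtonT 1 (augHess H u x) i j *
          discLaplRemainder h (fun y => H y i j) u x| := by
        rw [abs_mul, abs_of_nonneg φ_nonneg, contractedRemainder]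
        simp only [← Finset.mul_sum]
        gcongr
        exact (Finset.abs_sum_le_sum_abs _ _).trans
          (Finset.sum_le_sum fun i _ => Finset.abs_sum_le_sum_abs _ _)
    _ ≤ ∑ _ : Fin n, ∑ _ : Fin n, (n + 1) * (1 + L) * (L * (1 + M) ^ 2) * (φ * w x * T) :=
        Finset.sum_le_sum fun i _ => Finset.sum_le_sum fun j _ => term_le i j
    _ = n ^ 2 * (n + 1) * (1 + L) * (L * (1 + M) ^ 2) * (φ * w x * T) := by
        simp only [Finset.sum_const, Finset.card_univ, Fintype.card_fin, nsmul_eq_mul]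
        ring
    _ ≤ _ := by
        rw [mul_assoc _ (2 * (n : ℝ) + 5)]
        exact mul_le_mul_of_nonneg_left (hu.rpow_mul_mul_le_youngMajorant hr hx hq)
          (by positivity)

theorem setIntegral_rpow_mul_sq_le (hr : r ≤ r') (hq : 1 < q) (hw : ∀ x ∈ ball x₀ r', 0 ≤ w x)
    (hvi : IntegrableOn (fun x => max (v x) 0 ^ (q + 2)) (ball x₀ r))
    (hwi : IntegrableOn (fun x => w x ^ (q + 2)) (ball x₀ r')) :
    ∫ x in ball x₀ r, max (v x) 0 ^ q * w x ^ 2 ≤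
      2 * ((∫ x in ball x₀ r, max (v x) 0 ^ (q + 2)) + ∫ x in ball x₀ r', w x ^ (q + 2)) := by
  have subset : ball x₀ r ⊆ ball x₀ r' := ball_subset_ball hr
  have hwi' := hwi.mono_set subset
  calc ∫ x in ball x₀ r, max (v x) 0 ^ q * w x ^ 2
      ≤ ∫ x in ball x₀ r, 2 * (max (v x) 0 ^ (q + 2) + w x ^ (q + 2)) := by
        refine integral_mono_of_nonneg (.of_forall fun x => ?_) ((hvi.fun_add hwi').const_mul 2)
          (ae_restrict_of_forall_mem measurableSet_ball fun x hx =>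
            rpow_mul_sq_le hq (hw x (subset hx)) (le_max_right _ _))
        exact mul_nonneg (Real.rpow_nonneg (le_max_right _ _) _) (sq_nonneg _)
    _ = 2 * ((∫ x in ball x₀ r, max (v x) 0 ^ (q + 2)) + ∫ x in ball x₀ r, w x ^ (q + 2)) := by
        rw [integral_const_mul, integral_add hvi hwi']
    _ ≤ _ := by
        gcongr
        exact ae_restrict_of_forall_mem measurableSet_ball fun x hx => Real.rpow_nonneg (hw x hx) _

theorem integrableOn_youngMajorant (hr : r + |h| < r') (hw : ContinuousOn w (ball x₀ r'))
    (hq : 0 ≤ q + 2) (hvi : IntegrableOn (fun x => max (v x) 0 ^ (q + 2)) (ball x₀ r)) :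
    IntegrableOn (youngMajorant q h v w) (ball x₀ r) := by
  have hwq : ContinuousOn (fun y => w y ^ (q + 2)) (ball x₀ r') :=
    hw.rpow_const fun _ _ => Or.inr hq
  have average {a : ℝ} (ha : |a| = |h|) (l : Fin n) :
      IntegrableOn (segAvg (fun y => w y ^ (q + 2)) (a • Pi.single l 1)) (ball x₀ r) :=
    integrableOn_segAvg (by rwa [norm_smul_single, ha]) hwq
  exact (hvi.fun_add (integrableOn_ball (by linarith [abs_nonneg h]) hwq)).fun_add
    (integrable_finsetSum _ fun l _ => (average rfl l).fun_add (average (abs_neg h) l))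

theorem setIntegral_youngMajorant_le (hr : r + |h| < r') (hw : ContinuousOn w (ball x₀ r'))
    (hw0 : ∀ y ∈ ball x₀ r', 0 ≤ w y) (hq : 0 ≤ q + 2)
    (hvi : IntegrableOn (fun x => max (v x) 0 ^ (q + 2)) (ball x₀ r))
    (hwi : IntegrableOn (fun x => w x ^ (q + 2)) (ball x₀ r')) :
    ∫ x in ball x₀ r, youngMajorant q h v w x ≤
      (2 * n + 1) * ((∫ x in ball x₀ r, max (v x) 0 ^ (q + 2)) +
        ∫ x in ball x₀ r', w x ^ (q + 2)) := by
  have subset : ball x₀ r ⊆ ball x₀ r' := ball_subset_ball (by linarith [abs_nonneg h])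
  have hwq : ContinuousOn (fun y => w y ^ (q + 2)) (ball x₀ r') :=
    hw.rpow_const fun _ _ => Or.inr hq
  have hwq0 (y : Fin n → ℝ) (hy : y ∈ ball x₀ r') : 0 ≤ w y ^ (q + 2) :=
    Real.rpow_nonneg (hw0 y hy) _
  have norm_lt {a : ℝ} (ha : |a| = |h|) (l : Fin n) :
      r + ‖a • (Pi.single l 1 : Fin n → ℝ)‖ < r' := by rwa [norm_smul_single, ha]
  have average {a : ℝ} (ha : |a| = |h|) (l : Fin n) :=
    integrableOn_segAvg (μ := volume) (norm_lt ha l) hwq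
  have average_le {a : ℝ} (ha : |a| = |h|) (l : Fin n) :=
    setIntegral_segAvg_le (norm_lt ha l) hwq hwi hwq0
  have averages (l : Fin n) := (average rfl l).fun_add (average (abs_neg h) l)
  have hwi' := hwi.mono_set subset
  set X := ∫ x in ball x₀ r, max (v x) 0 ^ (q + 2)
  set Y := ∫ x in ball x₀ r', w x ^ (q + 2)
  have wpow_le : ∫ x in ball x₀ r, w x ^ (q + 2) ≤ Y := setIntegral_mono_set hwi
    (ae_restrict_of_forall_mem measurableSet_ball hwq0) subset.eventuallyLE
  have hX : 0 ≤ X := integral_nonneg fun x => Real.rpow_nonneg (le_max_right _ _) _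
  calc ∫ x in ball x₀ r, youngMajorant q h v w x
      = X + (∫ x in ball x₀ r, w x ^ (q + 2)) +
          ∑ l, ((∫ x in ball x₀ r, segAvg (fun y => w y ^ (q + 2)) (h • Pi.single l 1) x) +
            ∫ x in ball x₀ r, segAvg (fun y => w y ^ (q + 2)) (-h • Pi.single l 1) x) := by
        simp only [youngMajorant]
        rw [integral_add (hvi.fun_add hwi') (integrable_finsetSum _ fun l _ => averages l),
          integral_add hvi hwi', integral_finsetSum _ fun l _ => averages l]
        simp only [integral_add (average rfl _) (average (abs_neg h) _)]
        rfl
    _ ≤ X + Y + ∑ _ : Fin n, (Y + Y) := by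
        gcongr with l
        exacts [average_le rfl l, average_le (abs_neg h) l]
    _ ≤ (2 * n + 1) * (X + Y) := by
        simp only [Finset.sum_const, Finset.card_univ, Fintype.card_fin, nsmul_eq_mul]
        linarith [mul_nonneg (Nat.cast_nonneg (α := ℝ) n) hX]

end Remainder

/-! ### The cancellation estimate -/

section Estimate

variable {n : ℕ} {O : Set (Fin n → ℝ)} {u v w η : (Fin n → ℝ) → ℝ} {x x₀ : Fin n → ℝ}
  {r r' h c C₁ M q : ℝ} {H : JetSpace n → Matrix (Fin n) (Fin n) ℝ} {K : Set (JetSpace n)}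
  {L : NNReal}

theorem sum_pd_newtonT_mul_pd_add_eq (hO : IsOpen O) (hu : ContDiffOn ℝ 3 u O) (hx : x ∈ O)
    (hH : ∀ i j, DifferentiableAt ℝ (fun y => H y i j) (jet u x))
    (hv : ∀ m, pd m v x = discLapl h (pd m u) x) :
    ∑ j, (∑ i, pd i (fun y => newtonT 1 (augHess H u y) i j) x) * pd j v x +
        ∑ l, ∑ i, ∑ j, newtonT 1 (augHess H u x) i j * ddq l h (fun y => H (jet u y) i j) x =
      flux H u v x + contractedRemainder H h u x := by
  have chain_terms : ∑ m, (∑ i, ∑ j, newtonT 1 (augHess H u x) i j *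
        gradientDeriv m (fun y => H y i j) (jet u x)) * pd m v x =
      ∑ i, ∑ j, newtonT 1 (augHess H u x) i j *
        ∑ k, gradientDeriv k (fun y => H y i j) (jet u x) * discLapl h (pd k u) x := by
    simp only [Finset.sum_mul, Finset.mul_sum, hv, mul_assoc]
    rw [Finset.sum_comm]
    exact Finset.sum_congr rfl fun i _ => Finset.sum_comm
  have discLapl_terms : ∑ l, ∑ i, ∑ j, newtonT 1 (augHess H u x) i j *
        ddq l h (fun y => H (jet u y) i j) x =
      ∑ i, ∑ j, newtonT 1 (augHess H u x) i j * discLapl h (fun y => H (jet u y) i j) x := by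
    simp only [discLapl, Finset.mul_sum]
    rw [Finset.sum_comm]
    exact Finset.sum_congr rfl fun i _ => Finset.sum_comm
  simp only [flux, ← sum_pd_newtonT_add_eq hO hu hx hH, contractedRemainder, discLaplRemainder,
    mul_sub, Finset.sum_sub_distrib, ← chain_terms, discLapl_terms, add_mul,
    Finset.sum_add_distrib]
  ring

namespace CoeffBound

theorem continuousOn_newtonT_augHess (hH : CoeffBound H K L) (hO : IsOpen O)
    (hu : ContDiffOn ℝ 2 u O) (huK : MapsTo (jet u) O K) (i j : Fin n) :
    ContinuousOn (fun x => newtonT 1 (augHess H u x) i j) O := by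
  have entry (i j : Fin n) : ContinuousOn (fun x => augHess H u x i j) O :=
    (continuousOn_hess_apply hO hu i j).sub
      ((hH.entry i j).continuousOn_comp_jet hO hu huK)
  simp only [newtonT_one_apply]
  fun_prop

theorem continuousOn_gradientDeriv (hH : CoeffBound H K L) (hO : IsOpen O)
    (hu : ContDiffOn ℝ 2 u O) (huK : MapsTo (jet u) O K) (i j k : Fin n) :
    ContinuousOn (fun x => gradientDeriv k (fun y => H y i j) (jet u x)) O :=
  ((hH.fderiv_entry i j).continuousOn_comp_jet hO hu huK).clm_apply continuousOn_const

theorem continuousOn_flux (hH : CoeffBound H K L) (hO : IsOpen O) (hu : ContDiffOn ℝ 2 u O)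
    (huK : MapsTo (jet u) O K) (hv : ContDiffOn ℝ 1 v O) : ContinuousOn (flux H u v) O := by
  have leading (i k m : Fin n) := (hH.leading i k m).continuousOn_comp_jet hO hu huK
  have lower (m : Fin n) := (hH.lower m).continuousOn_comp_jet hO hu huK
  have hessian := continuousOn_hess_apply hO hu
  have gradient (m : Fin n) := (contDiffOn_pd (m := 0) hO hv (by simp) m).continuousOn
  unfold flux
  fun_prop

theorem continuousOn_sum_pd_newtonT (hH : CoeffBound H K L) (hO : IsOpen O)
    (hu : ContDiffOn ℝ 3 u O) (huK : MapsTo (jet u) O K) (m : Fin n) :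
    ContinuousOn (fun x => ∑ i, pd i (fun y => newtonT 1 (augHess H u y) i m) x) O := by
  have hu₂ : ContDiffOn ℝ 2 u O := hu.of_le (by norm_num)
  have leading (i k m : Fin n) := (hH.leading i k m).continuousOn_comp_jet hO hu₂ huK
  have lower := (hH.lower m).continuousOn_comp_jet hO hu₂ huK
  have hessian := continuousOn_hess_apply hO hu₂
  have newton (i j : Fin n) := hH.continuousOn_newtonT_augHess hO hu₂ huK i j
  have gradient (i j : Fin n) := hH.continuousOn_gradientDeriv hO hu₂ huK i j m
  refine ContinuousOn.congr ?_ fun x hx =>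
    eq_sub_of_add_eq (sum_pd_newtonT_add_eq hO hu hx (hH.differentiableAt _ (huK hx)) m)
  fun_prop

theorem continuousOn_discLaplRemainder (hH : CoeffBound H K L) (hr : r + |h| ≤ r')
    (hu : ContDiffOn ℝ 2 u (ball x₀ r')) (huK : MapsTo (jet u) (ball x₀ r') K) (i j : Fin n) :
    ContinuousOn (discLaplRemainder h (fun y => H y i j) u) (ball x₀ r) := by
  have subset : ball x₀ r ⊆ ball x₀ r' := ball_subset_ball (by linarith [abs_nonneg h])
  have discLapl_comp {f : (Fin n → ℝ) → ℝ} (hf : ContinuousOn f (ball x₀ r')) :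
      ContinuousOn (discLapl h f) (ball x₀ r) :=
    (contDiffOn_discLapl hr (contDiffOn_zero.2 hf)).continuousOn
  exact (discLapl_comp ((hH.entry i j).continuousOn_comp_jet isOpen_ball hu huK)).sub <|
    continuousOn_finsetSum _ fun k _ =>
      ((hH.continuousOn_gradientDeriv isOpen_ball hu huK i j k).mono subset).mul
        (discLapl_comp (contDiffOn_pd (m := 0) isOpen_ball hu (by norm_num) k).continuousOn)

theorem continuousOn_contractedRemainder (hH : CoeffBound H K L) (hr : r + |h| ≤ r')
    (hu : ContDiffOn ℝ 2 u (ball x₀ r')) (huK : MapsTo (jet u) (ball x₀ r') K) :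
    ContinuousOn (contractedRemainder H h u) (ball x₀ r) :=
  continuousOn_finsetSum _ fun i _ => continuousOn_finsetSum _ fun j _ =>
    ((hH.continuousOn_newtonT_augHess isOpen_ball hu huK i j).mono
      (ball_subset_ball (by linarith [abs_nonneg h]))).mul
      (hH.continuousOn_discLaplRemainder hr hu huK i j)

end CoeffBound

theorem abs_setIntegral_mul_contractedRemainder_le (hη : IsCutoff η x₀ r c)
    (hu : HessBound u w M (ball x₀ r')) (hh : h ≠ 0) (hr : r + |h| < r') (hK : Convex ℝ K)
    (hH : CoeffBound H K L) (huK : MapsTo (jet u) (ball x₀ r') K) (hq : 1 < q)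
    (hv : v = fun x => discLapl h u x + C₁) (hC₁ : |C₁| ≤ M)
    (hwi : IntegrableOn (fun x => w x ^ (q + 2)) (ball x₀ r')) :
    |∫ x in ball x₀ r, η x * (max (v x) 0 ^ (q - 1) * contractedRemainder H h u x)| ≤
      n ^ 2 * (n + 1) * (1 + L) * (L * (1 + M) ^ 2) * (2 * n + 5) * ((2 * n + 1) *
        ((∫ x in ball x₀ r, max (v x) 0 ^ (q + 2)) + ∫ x in ball x₀ r', w x ^ (q + 2))) := by
  have hvC : ContinuousOn v (ball x₀ (r' - |h|)) := hv ▸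
    (contDiffOn_discLapl (by linarith) hu.contDiffOn).continuousOn.add continuousOn_const
  have hvi : IntegrableOn (fun x => max (v x) 0 ^ (q + 2)) (ball x₀ r) :=
    integrableOn_ball (r' := r' - |h|) (by linarith)
      ((hvC.sup continuousOn_const).rpow_const fun _ _ => Or.inr (by linarith))
  have majorant_integrable :=
    integrableOn_youngMajorant hr hu.continuousOn (by linarith : 0 ≤ q + 2) hvi
  have hM : 0 ≤ M := (abs_nonneg _).trans hC₁
  calc |∫ x in ball x₀ r, η x * (max (v x) 0 ^ (q - 1) * contractedRemainder H h u x)|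
      ≤ ∫ x in ball x₀ r, n ^ 2 * (n + 1) * (1 + L) * (L * (1 + M) ^ 2) * (2 * n + 5) *
          youngMajorant q h v w x := by
        rw [← Real.norm_eq_abs]
        refine norm_integral_le_of_norm_le (majorant_integrable.const_mul _)
          (ae_restrict_of_forall_mem measurableSet_ball fun x hx => ?_)
        rw [Real.norm_eq_abs, abs_mul, abs_of_nonneg (hη.mem_Icc x).1]
        exact (mul_le_of_le_one_left (abs_nonneg _) (hη.mem_Icc x).2).trans
          (hu.abs_rpow_mul_contractedRemainder_le hh hr (ball_subset_closedBall hx) hK hH huK hq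
            (by simpa [hv] using hC₁))
    _ ≤ _ := by
        rw [integral_const_mul]
        exact mul_le_mul_of_nonneg_left (setIntegral_youngMajorant_le hr hu.continuousOn
          (fun y hy => zero_le_one.trans (hu.one_le y hy)) (by linarith) hvi hwi) (by positivity)

theorem setIntegral_add_sum_setIntegral_eq (hη : IsCutoff η x₀ r c)
    (hu : ContDiffOn ℝ 3 u (ball x₀ r')) (hr : r + |h| < r') (hH : CoeffBound H K L)
    (huK : MapsTo (jet u) (ball x₀ r') K) (hq : 1 < q) (hv : v = fun x => discLapl h u x + C₁) :
    (∫ x in ball x₀ r, η x * max (v x) 0 ^ (q - 1) *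
        ∑ j, (∑ i, pd i (fun y => newtonT 1 (augHess H u y) i j) x) * pd j v x) +
      ∑ l, ∫ x in ball x₀ r, η x * max (v x) 0 ^ (q - 1) *
        ∑ i, ∑ j, newtonT 1 (augHess H u x) i j * ddq l h (fun y => H (jet u y) i j) x =
    (∫ x in ball x₀ r, η x * (max (v x) 0 ^ (q - 1) * flux H u v x)) +
      ∫ x in ball x₀ r, η x * (max (v x) 0 ^ (q - 1) * contractedRemainder H h u x) := by
  set s := r' - |h|
  have hsr : s + |h| ≤ r' := (sub_add_cancel r' |h|).le
  have hrs : r < s := lt_sub_iff_add_lt.2 hr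
  have subset : ball x₀ s ⊆ ball x₀ r' := ball_subset_ball (by linarith [abs_nonneg h])
  have hu₂ : ContDiffOn ℝ 2 u (ball x₀ r') := hu.of_le (by norm_num)
  have hu' := hu.mono subset
  have huK' := huK.mono_left subset
  have hvC : ContDiffOn ℝ 1 v (ball x₀ s) := hv ▸
    (contDiffOn_discLapl hsr (hu.of_le (by norm_num))).add contDiffOn_const
  have integrable {g : (Fin n → ℝ) → ℝ} (hg : ContinuousOn g (ball x₀ s)) :
      IntegrableOn (fun x => η x * (max (v x) 0 ^ (q - 1) * g x)) (ball x₀ r) :=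
    (hη.integrable_mul hrs <| ((hvC.continuousOn.sup continuousOn_const).rpow_const
      fun _ _ => Or.inr (by linarith)).mul hg).integrableOn
  have divergence := integrable (g := fun x => ∑ j,
      (∑ i, pd i (fun y => newtonT 1 (augHess H u y) i j) x) * pd j v x) <|
    continuousOn_finsetSum _ fun j _ =>
      (hH.continuousOn_sum_pd_newtonT isOpen_ball hu' huK' j).mul
        (contDiffOn_pd (m := 0) isOpen_ball hvC (by simp) j).continuousOn
  have quotient (l : Fin n) := integrable (g := fun x => ∑ i, ∑ j,
      newtonT 1 (augHess H u x) i j * ddq l h (fun y => H (jet u y) i j) x) <|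
    continuousOn_finsetSum _ fun i _ => continuousOn_finsetSum _ fun j _ =>
      (hH.continuousOn_newtonT_augHess isOpen_ball (hu₂.mono subset) huK' i j).mul
        (contDiffOn_ddq hsr (contDiffOn_zero.2
          ((hH.entry i j).continuousOn_comp_jet isOpen_ball hu₂ huK)) l).continuousOn
  simp only [mul_assoc]
  rw [← integral_finsetSum _ fun l _ => quotient l,
    ← integral_add divergence (integrable_finsetSum _ fun l _ => quotient l),
    ← integral_add (integrable (hH.continuousOn_flux isOpen_ball (hu₂.mono subset) huK' hvC))
      (integrable (hH.continuousOn_contractedRemainder hsr hu₂ huK))]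
  refine setIntegral_congr_fun measurableSet_ball fun x hx => ?_
  have hx' : x ∈ ball x₀ s := ball_subset_ball hrs.le hx
  have pd_v (m : Fin n) : pd m v x = discLapl h (pd m u) x := by
    rw [← pd_discLapl hsr (hu.of_le (by norm_num)) hx' m, hv]
    simp only [pd, fderiv_add_const]
  simp only [← Finset.mul_sum, ← mul_add]
  rw [sum_pd_newtonT_mul_pd_add_eq isOpen_ball hu' hx' (hH.differentiableAt _ (huK' hx')) pd_v]

/-- The constant of the estimate in terms of the bound `L` for the coefficients and the bound `M`
for `u` and `∇u`; the two summands come from the flux and from the remainder. -/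
noncomputable def cancellationConst (n : ℕ) (L M : ℝ) : ℝ :=
  n * (n ^ 2 + 1) * (L * (1 + M) * 2) +
    n ^ 2 * (n + 1) * (1 + L) * (L * (1 + M) ^ 2) * (2 * n + 5) * (2 * n + 1)

theorem abs_setIntegral_add_sum_setIntegral_le (hη : IsCutoff η x₀ r c) (hc : 0 ≤ c)
    (hu : HessBound u w M (ball x₀ r')) (hh : h ≠ 0) (hr : r + |h| < r') (hK : Convex ℝ K)
    (hH : CoeffBound H K L) (huK : MapsTo (jet u) (ball x₀ r') K) (hq : 1 < q)
    (hv : v = fun x => discLapl h u x + C₁) (hC₁ : |C₁| ≤ M)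
    (hwi : IntegrableOn (fun x => w x ^ (q + 2)) (ball x₀ r')) :
    |(∫ x in ball x₀ r, η x * max (v x) 0 ^ (q - 1) *
        ∑ j, (∑ i, pd i (fun y => newtonT 1 (augHess H u y) i j) x) * pd j v x) +
      ∑ l, ∫ x in ball x₀ r, η x * max (v x) 0 ^ (q - 1) *
        ∑ i, ∑ j, newtonT 1 (augHess H u x) i j * ddq l h (fun y => H (jet u y) i j) x| ≤
    cancellationConst n L M * (c + 1) *
      ((∫ x in ball x₀ r, max (v x) 0 ^ (q + 2)) + ∫ x in ball x₀ r', w x ^ (q + 2)) := by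
  have hM : 0 ≤ M := (abs_nonneg _).trans hC₁
  have hrs : r < r' - |h| := lt_sub_iff_add_lt.2 hr
  have hsr : r' - |h| < r' := sub_lt_self _ (abs_pos.2 hh)
  have hvC : ContDiffOn ℝ 1 v (ball x₀ (r' - |h|)) := hv ▸
    (contDiffOn_discLapl (sub_add_cancel r' |h|).le (hu.contDiffOn.of_le (by norm_num))).add
      contDiffOn_const
  have hvi : IntegrableOn (fun x => max (v x) 0 ^ (q + 2)) (ball x₀ r) :=
    integrableOn_ball hrs ((hvC.continuousOn.sup continuousOn_const).rpow_const
      fun _ _ => Or.inr (by linarith))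
  have w_nonneg : ∀ x ∈ ball x₀ r', 0 ≤ w x := fun x hx => zero_le_one.trans (hu.one_le x hx)
  have flux_le := abs_setIntegral_mul_flux_le hη hu hrs hsr hH huK hq hvC
  have remainder_le :=
    abs_setIntegral_mul_contractedRemainder_le hη hu hh hr hK hH huK hq hv hC₁ hwi
  have young := setIntegral_rpow_mul_sq_le (hrs.trans hsr).le hq w_nonneg hvi hwi
  rw [setIntegral_add_sum_setIntegral_eq hη hu.contDiffOn hr hH huK hq hv]
  set S := (∫ x in ball x₀ r, max (v x) 0 ^ (q + 2)) + ∫ x in ball x₀ r', w x ^ (q + 2)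
  have hS : 0 ≤ S := add_nonneg
    (integral_nonneg fun x => Real.rpow_nonneg (le_max_right _ _) _)
    (setIntegral_nonneg measurableSet_ball fun x hx => Real.rpow_nonneg (w_nonneg x hx) _)
  calc _ ≤ n * (n ^ 2 + 1) * ((c + 1) * (L * (1 + M) * (2 * S))) +
        (c + 1) * (n ^ 2 * (n + 1) * (1 + L) * (L * (1 + M) ^ 2) * (2 * n + 5) *
          ((2 * n + 1) * S)) := by
        refine (abs_add_le _ _).trans (add_le_add (flux_le.trans ?_) (remainder_le.trans ?_))
        · gcongr
        · exact le_mul_of_one_le_left (by positivity) (by linarith)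
    _ = cancellationConst n L M * (c + 1) * S := by
        rw [cancellationConst]
        ring

end Estimate

section Classical

variable {n : ℕ} {O : Set (Fin n → ℝ)} {u η : (Fin n → ℝ) → ℝ} {x₀ : Fin n → ℝ}
  {r c C₁ M : ℝ}

theorem continuousOn_lapl (hO : IsOpen O) (hu : ContDiffOn ℝ 3 u O) : ContinuousOn (lapl u) O :=
  continuousOn_finsetSum _ fun l _ =>
    continuousOn_hess_apply hO (hu.of_le (by norm_num)) l l

theorem hessBound_lapl_add (hO : IsOpen O) (hu : ContDiffOn ℝ 3 u O)
    (hM : ∀ x ∈ O, |u x| + vnorm (grad u x) ≤ M)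
    (hw : ∀ x ∈ O, 1 ≤ lapl u x + C₁ ∧ matNorm (hess u x) ≤ lapl u x + C₁) :
    HessBound u (fun x => lapl u x + C₁) M O where
  contDiffOn := hu
  continuousOn := (continuousOn_lapl hO hu).add continuousOn_const
  one_le x hx := (hw x hx).1
  abs_apply_le x hx := (le_add_of_nonneg_right (Real.sqrt_nonneg _)).trans (hM x hx)
  abs_pd_le x hx i := (abs_apply_le_vnorm (grad u x) i).trans <|
    (le_add_of_nonneg_left (abs_nonneg _)).trans (hM x hx)
  abs_pd_pd_le x hx i j := (abs_apply_le_matNorm (hess u x) i j).trans (hw x hx).2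

theorem isCutoff_of_vnorm_grad_le (hη : ContDiff ℝ 1 η) (hη0 : ∀ x ∉ ball x₀ r, η x = 0)
    (hη1 : ∀ x, 0 ≤ η x ∧ η x ≤ 1) (hc : ∀ x, vnorm (grad η x) ≤ c) : IsCutoff η x₀ r c :=
  ⟨hη, hη0, hη1, fun x j => (abs_apply_le_vnorm (grad η x) j).trans (hc x)⟩

end Classical

theorem div_add_one_le_div_sq {a R ρ : ℝ} (ha : 0 ≤ a) (hρ : 0 < ρ) (hρR : ρ ≤ R) :
    a / ρ + 1 ≤ (a * R + R ^ 2) / ρ ^ 2 := by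
  rw [le_div_iff₀ (by positivity)]
  calc (a / ρ + 1) * ρ ^ 2 = a * ρ + ρ ^ 2 := by field_simp
    _ ≤ a * R + R ^ 2 := by gcongr

theorem cancellation_higher_order_k2_generalH_general {n : ℕ} {Ω : Set (Fin n → ℝ)}
    (hΩ : IsOpen Ω) {H : JetSpace n → Matrix (Fin n) (Fin n) ℝ}
    (hH : ∀ i j, C11On (fun y => H y i j) (Ω ×ˢ univ ×ˢ univ)) {x₀ : Fin n → ℝ} {R : ℝ}
    (hR : 0 < R) (hball : closure (ball x₀ (2 * R)) ⊆ Ω) (M c₀ : ℝ) :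
    ∃ C : ℝ, ∀ (u : (Fin n → ℝ) → ℝ) (C₁ q ρ h : ℝ) (η : (Fin n → ℝ) → ℝ),
      ContDiffOn ℝ 3 u Ω →
      (∀ x ∈ ball x₀ (2 * R), |u x| + vnorm (grad u x) ≤ M) →
      |C₁| ≤ M →
      (∀ x ∈ ball x₀ (2 * R), 1 ≤ lapl u x + C₁ ∧ matNorm (hess u x) ≤ lapl u x + C₁) →
      1 < q → 0 < ρ → ρ ≤ R / 3 → h ≠ 0 → |h| < ρ →
      ContDiff ℝ 1 η →
      (∀ x ∉ ball x₀ (R + 2 * ρ), η x = 0) →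
      (∀ x, 0 ≤ η x ∧ η x ≤ 1) →
      (∀ x, vnorm (grad η x) ≤ c₀ / ρ) →
      |(∫ x in ball x₀ (R + 2 * ρ), η x * max (discLapl h u x + C₁) 0 ^ (q - 1) *
          ∑ j, (∑ i, pd i (fun y => newtonT 1 (augHess H u y) i j) x) *
            pd j (fun y => discLapl h u y + C₁) x) +
        ∑ l, ∫ x in ball x₀ (R + 2 * ρ), η x * max (discLapl h u x + C₁) 0 ^ (q - 1) *
          ∑ i, ∑ j, newtonT 1 (augHess H u x) i j * ddq l h (fun y => H (jet u y) i j) x| ≤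
      C / ρ ^ 2 * ((∫ x in ball x₀ (R + 2 * ρ), max (discLapl h u x + C₁) 0 ^ (q + 2)) +
        ∫ x in ball x₀ (R + 3 * ρ), (lapl u x + C₁) ^ (q + 2)) := by
  rw [closure_ball x₀ (by positivity)] at hball
  obtain ⟨L, hL⟩ := exists_coeffBound (hΩ.prod (isOpen_univ.prod isOpen_univ)) hH
    isCompact_jetBox convex_jetBox (K := jetBox x₀ (2 * R) M)
    fun y hy => ⟨hball hy.1, mem_univ _, mem_univ _⟩
  refine ⟨cancellationConst n L M * (c₀ * R + R ^ 2),
    fun u C₁ q ρ h η hu hM hC₁ hw hq hρ hρR hh hhρ hη hη0 hη1 hηc => ?_⟩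
  have subset_ball : ball x₀ (R + 3 * ρ) ⊆ ball x₀ (2 * R) := ball_subset_ball (by linarith)
  have subset_Ω := ball_subset_closedBall.trans hball
  have hc₀ : 0 ≤ c₀ / ρ := (Real.sqrt_nonneg _).trans (hηc x₀)
  have hessBound := hessBound_lapl_add isOpen_ball (hu.mono (subset_ball.trans subset_Ω))
    (fun x hx => hM x (subset_ball hx)) fun x hx => hw x (subset_ball hx)
  have lapl_integrable : IntegrableOn (fun x => (lapl u x + C₁) ^ (q + 2))
      (ball x₀ (R + 3 * ρ)) :=
    (((((continuousOn_lapl hΩ hu).mono hball).add continuousOn_const).rpow_const fun _ _ =>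
      Or.inr (by linarith)).integrableOn_compact (isCompact_closedBall _ _)).mono_set
      (subset_ball.trans ball_subset_closedBall)
  refine (abs_setIntegral_add_sum_setIntegral_le (isCutoff_of_vnorm_grad_le hη hη0 hη1 hηc) hc₀
    hessBound hh (by linarith) convex_jetBox hL
    (hessBound.mapsTo_jet (subset_ball.trans ball_subset_closedBall)) hq rfl hC₁
    lapl_integrable).trans ?_
  have hM0 : 0 ≤ M := (abs_nonneg _).trans hC₁
  rw [mul_div_assoc]
  gcongr
  · exact add_nonneg (integral_nonneg fun x => Real.rpow_nonneg (le_max_right _ _) _)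
      (setIntegral_nonneg measurableSet_ball fun x hx =>
        Real.rpow_nonneg (zero_le_one.trans (hessBound.one_le x hx)) _)
  · unfold cancellationConst
    positivity
  · exact div_add_one_le_div_sq (nonneg_of_mul_nonneg_left hc₀ (inv_pos.2 hρ)) hρ (by linarith)

/-- Cancellation of higher order terms for `k = 2` with general `H`
(Corollary 4.9, estimate (L), for classical functions). -/
theorem cancellation_higher_order_k2_generalH
    {n : ℕ} (hn : 3 ≤ n)
    (Ω : Set (Fin n → ℝ)) (hΩ : IsOpen Ω)
    (H : ((Fin n → ℝ) × ℝ × (Fin n → ℝ)) → Matrix (Fin n) (Fin n) ℝ)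
    (hH : ∀ i j : Fin n,
      C11On (fun y => H y i j) (Ω ×ˢ ((univ : Set ℝ) ×ˢ (univ : Set (Fin n → ℝ)))))
    (hHsymm : ∀ y ∈ Ω ×ˢ ((univ : Set ℝ) ×ˢ (univ : Set (Fin n → ℝ))), (H y).IsSymm)
    (x₀ : Fin n → ℝ) (R : ℝ) (hR : 0 < R)
    (hball : closure (ball x₀ (2 * R)) ⊆ Ω)
    (M : ℝ) (hM : 0 < M) (c₀ : ℝ) (hc₀ : 0 < c₀) :
    ∃ C : ℝ, ∀ (u : (Fin n → ℝ) → ℝ) (C₁ q ρ h : ℝ) (η : (Fin n → ℝ) → ℝ),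
      ContDiffOn ℝ 3 u Ω →
      (∀ x ∈ ball x₀ (2 * R), |u x| + vnorm (grad u x) ≤ M) →
      0 ≤ C₁ → C₁ ≤ M →
      (∀ x ∈ ball x₀ (2 * R), 1 ≤ lapl u x + C₁ ∧ matNorm (hess u x) ≤ lapl u x + C₁) →
      1 < q → 0 < ρ → ρ ≤ R / 3 → h ≠ 0 → |h| < ρ →
      ContDiff ℝ (⊤ : ℕ∞) η →
      (∀ x, x ∉ ball x₀ (R + 2 * ρ) → η x = 0) →
      (∀ x, 0 ≤ η x ∧ η x ≤ 1) →
      (∀ x ∈ ball x₀ (R + ρ), η x = 1) →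
      (∀ x, vnorm (grad η x) ≤ c₀ / ρ) →
      (∀ x, matNorm (hess η x) ≤ c₀ / ρ ^ 2) →
      (∫ x in ball x₀ (R + 2 * ρ),
          η x * (max ((∑ l : Fin n, ddq l h u x) + C₁) 0) ^ (q - 1) *
            ∑ j, (∑ i, pd i (fun y =>
                newtonT 1 (hess u y - H (y, u y, grad u y)) i j) x) *
              pd j (fun y => (∑ l : Fin n, ddq l h u y) + C₁) x)
        + ∑ l : Fin n, ∫ x in ball x₀ (R + 2 * ρ),
            η x * (max ((∑ l' : Fin n, ddq l' h u x) + C₁) 0) ^ (q - 1) *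
              ∑ i, ∑ j, newtonT 1 (hess u x - H (x, u x, grad u x)) i j *
                ddq l h (fun y => H (y, u y, grad u y) i j) x
      ≥ -(C / ρ ^ 2) *
          ((∫ x in ball x₀ (R + 2 * ρ),
              (max ((∑ l : Fin n, ddq l h u x) + C₁) 0) ^ (q + 2))
            + ∫ x in ball x₀ (R + 3 * ρ), (lapl u x + C₁) ^ (q + 2)) := by
  obtain ⟨C, hC⟩ := cancellation_higher_order_k2_generalH_general hΩ hH hR hball M c₀
  refine ⟨C, fun u C₁ q ρ h η hu hM' hC₁ hC₁M hw hq hρ hρR hh hhρ hη hη0 hη1 _ hηc _ => ?_⟩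
  rw [neg_mul]
  exact (abs_le.1 (hC u C₁ q ρ h η hu hM' (by rwa [abs_of_nonneg hC₁]) hw hq hρ hρR hh hhρ
    (hη.of_le (mod_cast le_top)) hη0 hη1 hηc)).1
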